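/- arXiv:2307.05401 — 6 statements merged into one kernel-verified Lean document; each statement's English description precedes it below -/
import Mathlib

section
/- Let F : ℝⁿ → [0, ∞] be measurable and define its Kelvin image G(z) := |z|^{−(2m+n)} F(z/|z|²) for z ≠ 0 (and G(0) arbitrary). Then for every nonzero x ∈ ℝⁿ one has, as an identity in [0, ∞], ∫_{ℝⁿ} |x−z|^{2m−n} G(z) dz = |x|^{2m−n} ∫_{ℝⁿ} | x/|x|² − y |^{2m−n} F(y) dy. -/
open MeasureTheory
open scoped ENNReal

theorem abs_det_isometry_of_invol {E : Type*} [NormedAddCommGroup E] [InnerProductSpace ℝ E]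
    (e : E ≃ₗᵢ[ℝ] E) (he : ∀ v, e (e v) = v) :
    |LinearMap.det (((e : E →L[ℝ] E)) : E →ₗ[ℝ] E)| = 1 := by
  rw [← pow_eq_one_iff_of_nonneg (abs_nonneg _) two_ne_zero, sq_abs, sq, ← LinearMap.det_comp]
  have h : ((e : E →L[ℝ] E) : E →ₗ[ℝ] E) ∘ₗ ((e : E →L[ℝ] E) : E →ₗ[ℝ] E) = LinearMap.id :=
    LinearMap.ext fun v => he v
  rw [h, LinearMap.det_id]

/-- Kelvin transform identity for the Riesz-type potential: if
`G(z) = |z|^{−(2m+n)} F(z/|z|²)` for `z ≠ 0`, then for every nonzero `x`,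
`∫ |x−z|^{2m−n} G(z) dz = |x|^{2m−n} ∫ |x/|x|² − y|^{2m−n} F(y) dy`
as an identity in `[0, ∞]`. -/
theorem stmt2 (n m : ℕ) (hn : 3 ≤ n) (hodd : Odd n) (hmn : n < 2 * m)
    (F G : EuclideanSpace ℝ (Fin n) → ℝ≥0∞) (hF : Measurable F)
    (hG : ∀ z : EuclideanSpace ℝ (Fin n), z ≠ 0 →
      G z = (ENNReal.ofReal (‖z‖ ^ (2 * m + n)))⁻¹ * F ((‖z‖ ^ 2)⁻¹ • z))
    (x : EuclideanSpace ℝ (Fin n)) (hx : x ≠ 0) :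
    ∫⁻ z, ENNReal.ofReal (‖x - z‖ ^ (2 * m - n)) * G z =
      ENNReal.ofReal (‖x‖ ^ (2 * m - n)) *
        ∫⁻ y, ENNReal.ofReal (‖(‖x‖ ^ 2)⁻¹ • x - y‖ ^ (2 * m - n)) * F y := by
  have hfin : Fact (0 < n) := ⟨by omega⟩
  have hne : Nontrivial (EuclideanSpace ℝ (Fin n)) := ⟨x, 0, hx⟩
  have hres : ∀ H : EuclideanSpace ℝ (Fin n) → ℝ≥0∞,
      ∫⁻ z, H z = ∫⁻ z in ({0}ᶜ : Set (EuclideanSpace ℝ (Fin n))), H z := by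
    intro H
    rw [Measure.restrict_congr_set (t := Set.univ), Measure.restrict_univ]
    rw [ae_eq_univ, compl_compl]
    exact measure_singleton 0
  have hinv : ∀ z : EuclideanSpace ℝ (Fin n),
      EuclideanGeometry.inversion 0 1 z = (‖z‖ ^ 2)⁻¹ • z := by
    intro z
    simp [EuclideanGeometry.inversion]
  have hinj := EuclideanGeometry.inversion_injective (0 : EuclideanSpace ℝ (Fin n)) (one_ne_zero (α := ℝ))
  have himg : EuclideanGeometry.inversion 0 1 '' ({0}ᶜ : Set (EuclideanSpace ℝ (Fin n))) = {0}ᶜ := by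
    rw [Set.image_compl_eq (EuclideanGeometry.inversion_bijective _ one_ne_zero)]
    simp
  have hdist : ∀ z : EuclideanSpace ℝ (Fin n), z ≠ 0 →
      ‖(‖x‖ ^ 2)⁻¹ • x - (‖z‖ ^ 2)⁻¹ • z‖ = ‖x - z‖ / (‖x‖ * ‖z‖) := by
    intro z hz
    have := EuclideanGeometry.dist_inversion_inversion hx hz 1
    rw [hinv, hinv, dist_zero_right, dist_zero_right, dist_eq_norm, dist_eq_norm] at this
    rw [this]
    ring
  rw [hres, hres (fun y => ENNReal.ofReal (‖(‖x‖ ^ 2)⁻¹ • x - y‖ ^ (2 * m - n)) * F y)]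
  conv_rhs => rw [← himg]
  rw [lintegral_image_eq_lintegral_abs_det_fderiv_mul volume (measurableSet_singleton 0).compl
    (fun z hz => (EuclideanGeometry.hasFDerivAt_inversion (R := 1) hz).hasFDerivWithinAt)
    hinj.injOn, ← lintegral_const_mul' _ _ ENNReal.ofReal_ne_top]
  refine setLIntegral_congr_fun (measurableSet_singleton 0).compl ?_
  intro z hz
  have hz : z ≠ 0 := hz
  have hz' : 0 < ‖z‖ := norm_pos_iff.2 hz
  have hx' : 0 < ‖x‖ := norm_pos_iff.2 hx
  have hdet : |(((1 / dist z 0) ^ 2 • ((ℝ ∙ (z - 0))ᗮ.reflection :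
      EuclideanSpace ℝ (Fin n) →L[ℝ] EuclideanSpace ℝ (Fin n)))).det| = (‖z‖ ^ (2 * n))⁻¹ := by
    rw [ContinuousLinearMap.det, ContinuousLinearMap.toLinearMap_smul, LinearMap.det_smul, abs_mul]
    have h1 : |LinearMap.det (((ℝ ∙ (z - 0))ᗮ.reflection :
      EuclideanSpace ℝ (Fin n) →L[ℝ] EuclideanSpace ℝ (Fin n)) : EuclideanSpace ℝ (Fin n) →ₗ[ℝ] EuclideanSpace ℝ (Fin n))| = 1 := by
      exact abs_det_isometry_of_invol _ (Submodule.reflection_reflection _)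
    rw [h1, mul_one, finrank_euclideanSpace, Fintype.card_fin, dist_zero_right, abs_of_nonneg (by positivity)]
    rw [← pow_mul, one_div, inv_pow]
  simp only []
  rw [hdet]
  rw [hG z hz, hinv, hdist z hz, ← ENNReal.ofReal_inv_of_pos (by positivity), ← mul_assoc, ← mul_assoc, ← mul_assoc,
    ← ENNReal.ofReal_mul (by positivity), ← ENNReal.ofReal_mul (by positivity), ← ENNReal.ofReal_mul (by positivity)]
  congr 2
  obtain ⟨k, hk⟩ := Nat.exists_eq_add_of_lt hmn
  have e1 : 2 * m - n = k + 1 := by omega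
  have e2 : 2 * m + n = (k + 1) + 2 * n := by omega
  rw [e1, e2, pow_add ‖z‖, div_pow, mul_pow]
  field_simp
end

section
/- Let P, Q : ℝⁿ → ℝ be polynomial functions (restrictions to ℝⁿ of real polynomials in n variables) of total degree at most 2m−n, and suppose that Q(x) = |x|^{2m−n} P(x/|x|²) for every nonzero x ∈ ℝⁿ. Then P ≡ 0 and Q ≡ 0. -/
open MvPolynomial in
lemma zero_of_eval_ne {n : ℕ} (i₀ : Fin n) (F : MvPolynomial (Fin n) ℝ)
    (h : ∀ x : EuclideanSpace ℝ (Fin n), x ≠ 0 → eval (fun i => x i) F = 0) : F = 0 := by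
  have h1 : X i₀ * F = 0 := by
    apply MvPolynomial.funext
    intro x
    by_cases hx : x = 0
    · subst hx; simp
    · have := h (WithLp.toLp 2 x) (by simpa using hx)
      have h2 : eval x F = 0 := this
      simp [h2]
  rcases mul_eq_zero.1 h1 with h2 | h2
  · exact absurd h2 (X_ne_zero i₀)
  · exact h2

open MvPolynomial in
lemma not_sq {n : ℕ} (i₀ i₁ : Fin n) (hne : i₀ ≠ i₁) (g : MvPolynomial (Fin n) ℝ)
    (h : (∑ i, X i ^ 2 : MvPolynomial (Fin n) ℝ) = g ^ 2) : False := by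
  let p : Fin n → ℂ := fun i => if i = i₀ then Complex.I else if i = i₁ then 1 else 0
  have h1 := congrArg (fun F => aeval p F) h
  have hsum : (∑ i, p i ^ 2) = 0 := by
    have : ∀ i, p i ^ 2 = (if i = i₀ then (-1 : ℂ) else 0) + (if i = i₁ then 1 else 0) := by
      intro i
      by_cases a : i = i₀
      · subst a; simp [p, hne]
      · by_cases b : i = i₁ <;> simp [p, a, b, hne.symm]
    simp_rw [this, Finset.sum_add_distrib]
    simp
  have h2 := congrArg (fun F => aeval p (pderiv i₀ F)) h
  simp only [map_sum, map_pow, aeval_X, hsum] at h1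
  have hg : aeval p g = 0 := by
    exact pow_eq_zero_iff (two_ne_zero) |>.1 h1.symm
  simp [Derivation.leibniz_pow, pderiv_X, hg, Pi.single_apply] at h2
  simp [p] at h2

open MvPolynomial in
lemma exists_R {n : ℕ} (d : ℕ) (P : MvPolynomial (Fin n) ℝ) (hP : P.totalDegree ≤ d) :
    ∃ R : MvPolynomial (Fin n) ℝ, ∀ x : EuclideanSpace ℝ (Fin n), x ≠ 0 →
      eval (fun i => x i) R =
        (‖x‖ ^ 2) ^ d * eval (fun i => ((‖x‖ ^ 2)⁻¹ • x) i) P := by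
  refine ⟨∑ s ∈ P.support, monomial s (P.coeff s) * (∑ i, X i ^ 2) ^ (d - ∑ i, s i), ?_⟩
  intro x hx
  have hx' : ‖x‖ ^ 2 ≠ 0 := by simpa using hx
  have hn : ∑ i, x i ^ 2 = ‖x‖ ^ 2 := by
    rw [EuclideanSpace.norm_sq_eq]; simp
  rw [eval_eq' _ P, Finset.mul_sum, map_sum]
  refine Finset.sum_congr rfl fun s hs => ?_
  have hsd : ∑ i, s i ≤ d := by
    have := le_totalDegree hs
    rw [Finsupp.sum_fintype _ _ (by simp)] at this
    exact this.trans hP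
  simp only [map_mul, map_pow, map_sum, eval_X, hn, eval_monomial, PiLp.smul_apply, smul_eq_mul,
    mul_pow, Finset.prod_mul_distrib, Finset.prod_pow_eq_pow_sum]
  rw [Finsupp.prod_fintype _ _ (by simp)]
  have : (‖x‖ ^ 2) ^ d = (‖x‖ ^ 2) ^ (d - ∑ i, s i) * (‖x‖ ^ 2) ^ (∑ i, s i) := by
    rw [← pow_add]; congr 1; omega
  rw [this, inv_pow]
  have h3 : (‖x‖ ^ 2) ^ (∑ i, s i) ≠ 0 := pow_ne_zero _ hx'
  generalize (‖x‖ ^ 2) ^ (∑ i, s i) = A at *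
  field_simp


/-- If `P, Q` are real polynomial functions on `ℝⁿ` of total degree at most `2m−n`
(with `2m−n` a positive odd integer) and `Q(x) = |x|^{2m−n} P(x/|x|²)` for every
nonzero `x ∈ ℝⁿ`, then `P ≡ 0` and `Q ≡ 0`. -/
theorem stmt3 (n m : ℕ) (hn : 3 ≤ n) (hodd : Odd n) (hmn : n < 2 * m)
    (P Q : MvPolynomial (Fin n) ℝ)
    (hP : P.totalDegree ≤ 2 * m - n) (hQ : Q.totalDegree ≤ 2 * m - n)
    (hrel : ∀ x : EuclideanSpace ℝ (Fin n), x ≠ 0 →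
      MvPolynomial.eval (fun i => x i) Q =
        ‖x‖ ^ (2 * m - n) * MvPolynomial.eval (fun i => ((‖x‖ ^ 2)⁻¹ • x) i) P) :
    P = 0 ∧ Q = 0 := by
  classical
  have i₀ : Fin n := ⟨0, by omega⟩
  obtain ⟨k, hk⟩ : Odd (2 * m - n) := by
    obtain ⟨a, rfl⟩ := hodd
    exact ⟨m - a - 1, by omega⟩
  generalize 2 * m - n = d at *
  have hQ0 : Q = 0 := by
    by_contra hne
    obtain ⟨R, hR⟩ := exists_R d P hP
    set S : MvPolynomial (Fin n) ℝ := ∑ i, MvPolynomial.X i ^ 2 with hS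
    have hS0 : S ≠ 0 := by
      intro h
      exact not_sq (n := n) ⟨0, by omega⟩ ⟨1, by omega⟩ (by simp) 0 (by rw [← hS, h]; simp)
    have key : S ^ d * Q ^ 2 - R ^ 2 = 0 := by
      apply zero_of_eval_ne i₀
      intro x hx
      have hnx : ∑ i, x i ^ 2 = ‖x‖ ^ 2 := by
        rw [EuclideanSpace.norm_sq_eq]; simp
      simp only [hS, map_sub, map_mul, map_pow, map_sum, MvPolynomial.eval_X, hnx, hR x hx,
        hrel x hx]
      ring
    have key2 : S * (S ^ k * Q) ^ 2 = R ^ 2 := by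
      rw [← sub_eq_zero.1 key, hk]; ring
    have hf : S ^ k * Q ≠ 0 := mul_ne_zero (pow_ne_zero _ hS0) hne
    have hdvd : (S ^ k * Q) ∣ R := by
      have : (S ^ k * Q) ^ 2 ∣ R ^ 2 := ⟨S, by rw [← key2]; ring⟩
      exact (IsIntegrallyClosed.pow_dvd_pow_iff two_ne_zero).1 this
    obtain ⟨g, rfl⟩ := hdvd
    refine not_sq (n := n) ⟨0, by omega⟩ ⟨1, by omega⟩ (by simp) g ?_
    apply mul_right_cancel₀ (pow_ne_zero 2 hf)
    rw [← hS, key2]; ring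
  refine ⟨?_, hQ0⟩
  subst hQ0
  apply zero_of_eval_ne i₀
  intro y hy
  have hy' : ‖y‖ ≠ 0 := by simpa using hy
  have hx : (‖y‖ ^ 2)⁻¹ • y ≠ 0 := smul_ne_zero (by simpa using hy) hy
  have h := hrel _ hx
  have e : (‖(‖y‖ ^ 2)⁻¹ • y‖ ^ 2)⁻¹ • ((‖y‖ ^ 2)⁻¹ • y) = y := by
    rw [smul_smul, norm_smul]
    have : ((‖(‖y‖ ^ 2)⁻¹‖ * ‖y‖) ^ 2)⁻¹ * (‖y‖ ^ 2)⁻¹ = 1 := by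
      simp only [norm_inv, norm_pow, norm_norm]
      field_simp
    rw [this, one_smul]
  rw [e] at h
  have h4 := h.symm
  rw [map_zero] at h4
  exact (mul_eq_zero.1 h4).resolve_left (pow_ne_zero _ (by simpa using hx))
end

section
/- There exists a constant γ > 0, depending only on n and m, such that for every x ∈ ℝⁿ the function y ↦ |x−y|^{2m−n} (2/(1+|y|²))^{(n+2m)/2} is Lebesgue integrable on ℝⁿ and ((1+|x|²)/2)^{(2m−n)/2} = γ ∫_{ℝⁿ} |x−y|^{2m−n} (2/(1+|y|²))^{(n+2m)/2} dy. -/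
open MeasureTheory

/-- Norm of the inverted point. -/
lemma aux_norm {n : ℕ} (x z : EuclideanSpace ℝ (Fin n)) (hz : z ≠ x) (R : ℝ)
    (hR : R ^ 2 = 1 + ‖x‖ ^ 2) :
    1 + ‖EuclideanGeometry.inversion x R z‖ ^ 2 =
      (1 + ‖x‖ ^ 2) / ‖z - x‖ ^ 2 * (1 + ‖z‖ ^ 2) := by
  have hρ : 0 < ‖z - x‖ := norm_pos_iff.2 (sub_ne_zero.2 hz)
  have h1 : EuclideanGeometry.inversion x R z =
      ((1 + ‖x‖ ^ 2) / ‖z - x‖ ^ 2) • (z - x) + x := by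
    rw [EuclideanGeometry.inversion, dist_eq_norm, div_pow, hR]; rfl
  have h2 : ‖z‖ ^ 2 = ‖(z - x) + x‖ ^ 2 := by simp
  rw [h1, h2, norm_add_sq_real, norm_add_sq_real, norm_smul, mul_pow, inner_smul_left,
    Real.norm_eq_abs, sq_abs]
  simp only [conj_trivial]
  field_simp
  ring

lemma aux_det {n : ℕ} (x z : EuclideanSpace ℝ (Fin n)) (R : ℝ)
    (hR : R ^ 2 = 1 + ‖x‖ ^ 2) :
    |((R / dist z x) ^ 2 • ((ℝ ∙ (z - x))ᗮ.reflection :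
      EuclideanSpace ℝ (Fin n) →L[ℝ] EuclideanSpace ℝ (Fin n))).det| =
      ((1 + ‖x‖ ^ 2) / ‖z - x‖ ^ 2) ^ n := by
  have h : LinearMap.det (((ℝ ∙ (z - x))ᗮ.reflection :
      EuclideanSpace ℝ (Fin n) →L[ℝ] EuclideanSpace ℝ (Fin n)) :
      EuclideanSpace ℝ (Fin n) →ₗ[ℝ] EuclideanSpace ℝ (Fin n)) =
      (-1) ^ Module.finrank ℝ ((ℝ ∙ (z - x))ᗮᗮ : Submodule ℝ (EuclideanSpace ℝ (Fin n))) :=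
    Submodule.det_reflection (ℝ ∙ (z - x))ᗮ
  rw [ContinuousLinearMap.det, ContinuousLinearMap.toLinearMap_smul, LinearMap.det_smul, h,
    abs_mul, abs_neg_one_pow, mul_one, finrank_euclideanSpace_fin,
    dist_eq_norm, div_pow, hR, abs_of_nonneg (by positivity)]

lemma aux_alg (n m : ℕ) (hmn : n < 2 * m) (c ρ A : ℝ) (hc : 0 < c) (hρ : 0 < ρ) (hA : 0 < A) :
    (c / ρ ^ 2) ^ n * ((c / ρ) ^ (2 * m - n) *
      (2 / (c / ρ ^ 2 * A)) ^ (((n : ℝ) + 2 * m) / 2)) =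
      c ^ ((2 * (m : ℝ) - n) / 2) * (2 / A) ^ (((n : ℝ) + 2 * m) / 2) := by
  have h1 : 2 / (c / ρ ^ 2 * A) = (ρ ^ 2 / c) * (2 / A) := by field_simp
  rw [h1, Real.mul_rpow (by positivity) (by positivity), ← mul_assoc, ← mul_assoc]
  congr 1
  rw [← Real.rpow_natCast (c / ρ ^ 2) n, ← Real.rpow_natCast (c / ρ) (2 * m - n),
    Nat.cast_sub hmn.le]
  apply Real.log_injOn_pos (Set.mem_Ioi.2 (by positivity)) (Set.mem_Ioi.2 (by positivity))
  rw [Real.log_mul (by positivity) (by positivity), Real.log_mul (by positivity) (by positivity),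
    Real.log_rpow (by positivity), Real.log_rpow (by positivity), Real.log_rpow (by positivity),
    Real.log_rpow (by positivity), Real.log_div (by positivity) (by positivity),
    Real.log_div (by positivity) (by positivity), Real.log_div (by positivity) (by positivity),
    Real.log_pow]
  push_cast
  ring

/-- There is a constant `γ > 0`, depending only on `n` and `m`, such that for every
`x ∈ ℝⁿ` the function `y ↦ |x−y|^{2m−n} (2/(1+|y|²))^{(n+2m)/2}` is Lebesgue
integrable and `((1+|x|²)/2)^{(2m−n)/2} = γ ∫ |x−y|^{2m−n} (2/(1+|y|²))^{(n+2m)/2} dy`. -/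
theorem stmt4 (n m : ℕ) (hn : 3 ≤ n) (hodd : Odd n) (hmn : n < 2 * m) :
    ∃ γ : ℝ, 0 < γ ∧ ∀ x : EuclideanSpace ℝ (Fin n),
      Integrable (fun y : EuclideanSpace ℝ (Fin n) =>
        ‖x - y‖ ^ (2 * m - n) * (2 / (1 + ‖y‖ ^ 2)) ^ (((n : ℝ) + 2 * m) / 2)) ∧
      ((1 + ‖x‖ ^ 2) / 2) ^ ((2 * (m : ℝ) - n) / 2) =
        γ * ∫ y : EuclideanSpace ℝ (Fin n),
          ‖x - y‖ ^ (2 * m - n) * (2 / (1 + ‖y‖ ^ 2)) ^ (((n : ℝ) + 2 * m) / 2) := by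
  set r : ℝ := ((n : ℝ) + 2 * m) / 2 with hr
  have hm : (0 : ℝ) < m := by
    have : 0 < m := by omega
    exact_mod_cast this
  have hJ : Integrable (fun z : EuclideanSpace ℝ (Fin n) => (2 / (1 + ‖z‖ ^ 2)) ^ r) := by
    have h := (integrable_rpow_neg_one_add_norm_sq (E := EuclideanSpace ℝ (Fin n))
      (μ := volume) (r := (n : ℝ) + 2 * m)
      (by rw [finrank_euclideanSpace_fin]; linarith)).const_mul ((2 : ℝ) ^ r)
    refine h.congr (Filter.Eventually.of_forall fun z => ?_)
    simp only
    rw [neg_div, ← hr, Real.div_rpow (by positivity) (by positivity),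
      Real.rpow_neg (by positivity), div_eq_mul_inv]
  set J := ∫ z : EuclideanSpace ℝ (Fin n), (2 / (1 + ‖z‖ ^ 2)) ^ r with hJdef
  have hpos : ∀ z : EuclideanSpace ℝ (Fin n), 0 < (2 / (1 + ‖z‖ ^ 2)) ^ r :=
    fun z => by positivity
  have hJpos : 0 < J := by
    rw [hJdef, integral_pos_iff_support_of_nonneg (fun z => (hpos z).le) hJ]
    have : Function.support (fun z : EuclideanSpace ℝ (Fin n) => (2 / (1 + ‖z‖ ^ 2)) ^ r)
        = Set.univ := Set.eq_univ_of_forall fun z => (hpos z).ne'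
    rw [this]
    exact isOpen_univ.measure_pos _ Set.univ_nonempty
  have : NeZero n := ⟨by omega⟩
  refine ⟨(2 ^ ((2 * (m : ℝ) - n) / 2) * J)⁻¹, by positivity, fun x => ?_⟩
  have hc : 0 < 1 + ‖x‖ ^ 2 := by positivity
  set R := √(1 + ‖x‖ ^ 2) with hRdef
  have hR : R ^ 2 = 1 + ‖x‖ ^ 2 := Real.sq_sqrt hc.le
  have hR0 : R ≠ 0 := (Real.sqrt_pos.2 hc).ne'
  set g : EuclideanSpace ℝ (Fin n) → ℝ := fun y => ‖x - y‖ ^ (2 * m - n) *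
    (2 / (1 + ‖y‖ ^ 2)) ^ r with hg
  have hs : MeasurableSet ({x}ᶜ : Set (EuclideanSpace ℝ (Fin n))) :=
    (measurableSet_singleton x).compl
  have hf' : ∀ z ∈ ({x}ᶜ : Set (EuclideanSpace ℝ (Fin n))),
      HasFDerivWithinAt (EuclideanGeometry.inversion x R)
      ((R / dist z x) ^ 2 • ((ℝ ∙ (z - x))ᗮ.reflection :
      EuclideanSpace ℝ (Fin n) →L[ℝ] EuclideanSpace ℝ (Fin n))) {x}ᶜ z :=
    fun z hz => (EuclideanGeometry.hasFDerivAt_inversion hz).hasFDerivWithinAt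
  have hinj : Set.InjOn (EuclideanGeometry.inversion x R) {x}ᶜ :=
    (EuclideanGeometry.inversion_injective x hR0).injOn
  have himg : EuclideanGeometry.inversion x R '' {x}ᶜ = {x}ᶜ := by
    rw [Set.image_compl_eq (EuclideanGeometry.inversion_bijective x hR0), Set.image_singleton,
      EuclideanGeometry.inversion_self]
  have hres : (volume : Measure (EuclideanSpace ℝ (Fin n))).restrict {x}ᶜ = volume :=
    Measure.restrict_eq_self_of_ae_mem (by simp [ae_iff])
  have hpt : Set.EqOn (fun z => |((R / dist z x) ^ 2 • ((ℝ ∙ (z - x))ᗮ.reflection :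
      EuclideanSpace ℝ (Fin n) →L[ℝ] EuclideanSpace ℝ (Fin n))).det| •
      g (EuclideanGeometry.inversion x R z))
      (fun z => (1 + ‖x‖ ^ 2) ^ ((2 * (m : ℝ) - n) / 2) * (2 / (1 + ‖z‖ ^ 2)) ^ r) {x}ᶜ := by
    intro z hz
    have hz' : z ≠ x := hz
    have hρ : 0 < ‖z - x‖ := norm_pos_iff.2 (sub_ne_zero.2 hz')
    simp only [hg]
    rw [aux_det x z R hR, aux_norm x z hz' R hR, ← dist_eq_norm x,
      EuclideanGeometry.dist_center_inversion, hR, dist_comm, dist_eq_norm, smul_eq_mul,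
      aux_alg n m hmn _ _ _ hc hρ (by positivity)]
  have hint : Integrable g := by
    have h := integrableOn_image_iff_integrableOn_abs_det_fderiv_smul volume hs hf' hinj g
    rw [himg, integrableOn_congr_fun hpt hs, IntegrableOn, IntegrableOn, hres] at h
    exact h.2 (hJ.const_mul _)
  have hval : ∫ y, g y = (1 + ‖x‖ ^ 2) ^ ((2 * (m : ℝ) - n) / 2) * J := by
    have h := integral_image_eq_integral_abs_det_fderiv_smul volume hs hf' hinj g
    rw [himg, setIntegral_congr_fun hs hpt, hres, integral_const_mul] at h
    exact h
  refine ⟨hint, ?_⟩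
  rw [hval, Real.div_rpow hc.le (by positivity)]
  field_simp
end

section
/- Let ε ∈ [0,1), let α ∈ (0, (2m+n)/(2m−n)] with α ≠ 1, and let γ > 0. Let u be a positive smooth function on ℝⁿ such that for some c > 0 one has c^{−1}(1+|x|²)^{(2m−n)/2} ≤ u(x) ≤ c(1+|x|²)^{(2m−n)/2} for all x, and u(x) = γ ∫_{ℝⁿ} |x−y|^{2m−n} F_{ε,u}(y) dy for all x. Then, with c_α := α(2m−n)/2 − (2m+n)/2, both of the following integrals converge absolutely and ε m (1−α) ∫_{ℝⁿ} f(x)^{2m} u(x)² (1−|x|²)/(1+|x|²) dx = c_α ∫_{ℝⁿ} f(x)^{−c_α} u(x)^{1−α} (1−|x|²)/(1+|x|²) dx. -/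
open MeasureTheory

/-- The constant `c_α := α(2m−n)/2 − (2m+n)/2`. -/
noncomputable def cAlpha (n m : ℕ) (α : ℝ) : ℝ :=
  α * (2 * (m : ℝ) - n) / 2 - (2 * (m : ℝ) + n) / 2

/-- The nonlinearity `F_{ε,u}(x) := ε f(x)^{2m} u(x) +
f(x)^{(n+2m)/2 + α(n−2m)/2} u(x)^{−α}` with `f(x) = 2/(1+|x|²)`. -/
noncomputable def sphF (n m : ℕ) (ε α : ℝ) (u : EuclideanSpace ℝ (Fin n) → ℝ)
    (x : EuclideanSpace ℝ (Fin n)) : ℝ :=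
  ε * (2 / (1 + ‖x‖ ^ 2)) ^ (2 * m) * u x +
    (2 / (1 + ‖x‖ ^ 2)) ^ (((n : ℝ) + 2 * m) / 2 + α * ((n : ℝ) - 2 * m) / 2) * u x ^ (-α)

/-- The Japanese bracket. -/
noncomputable def jb {n : ℕ} (x : EuclideanSpace ℝ (Fin n)) : ℝ := Real.sqrt (1 + ‖x‖ ^ 2)

lemma jb_sq {n : ℕ} (x : EuclideanSpace ℝ (Fin n)) : jb x ^ 2 = 1 + ‖x‖ ^ 2 :=
  Real.sq_sqrt (by positivity)

lemma one_le_jb {n : ℕ} (x : EuclideanSpace ℝ (Fin n)) : 1 ≤ jb x := by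
  unfold jb
  rw [Real.one_le_sqrt]
  nlinarith [sq_nonneg ‖x‖]

lemma jb_pos {n : ℕ} (x : EuclideanSpace ℝ (Fin n)) : 0 < jb x :=
  lt_of_lt_of_le one_pos (one_le_jb x)

lemma norm_le_jb {n : ℕ} (x : EuclideanSpace ℝ (Fin n)) : ‖x‖ ≤ jb x :=
  Real.le_sqrt_of_sq_le (by linarith)

lemma continuous_jb {n : ℕ} : Continuous (jb : EuclideanSpace ℝ (Fin n) → ℝ) := by
  unfold jb; fun_prop

lemma jb_rpow {n : ℕ} (x : EuclideanSpace ℝ (Fin n)) (k : ℕ) :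
    (1 + ‖x‖ ^ 2) ^ ((k : ℝ) / 2) = jb x ^ k := by
  rw [← jb_sq, ← Real.rpow_natCast (jb x) 2, ← Real.rpow_mul (jb_pos x).le,
    ← Real.rpow_natCast]
  congr 1
  push_cast; ring

lemma integrable_jb {n : ℕ} (hn : 0 < n) (C : ℝ) :
    Integrable (fun x : EuclideanSpace ℝ (Fin n) => C * (jb x ^ (2 * n))⁻¹) := by
  apply Integrable.const_mul
  have h := integrable_rpow_neg_one_add_norm_sq (E := EuclideanSpace ℝ (Fin n))
    (μ := volume) (r := ((2 * n : ℕ) : ℝ)) (by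
      simp only [finrank_euclideanSpace, Fintype.card_fin]
      push_cast
      have : (0 : ℝ) < n := by exact_mod_cast hn
      linarith)
  refine h.congr (Filter.Eventually.of_forall fun x => ?_)
  simp only
  rw [← jb_rpow, neg_div, Real.rpow_neg (by positivity)]

lemma jb_smul {n : ℕ} (x : EuclideanSpace ℝ (Fin n)) (t : ℝ) (ht : 1 / 2 < t) :
    jb x ≤ 2 * jb (t • x) := by
  refine (sq_le_sq₀ (jb_pos x).le (by linarith [jb_pos (t • x)])).1 ?_
  rw [mul_pow, jb_sq, jb_sq, norm_smul, mul_pow, Real.norm_eq_abs, sq_abs]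
  nlinarith [mul_nonneg (sq_nonneg ‖x‖) (by nlinarith : (0 : ℝ) ≤ 4 * t ^ 2 - 1)]

/-- Euler-type integration by parts via dilation invariance. -/
lemma dilation_ibp {n : ℕ} (hn : 0 < n) (φ D : EuclideanSpace ℝ (Fin n) → ℝ) (C : ℝ)
    (hφ : Continuous φ) (hD : Continuous D)
    (hder : ∀ x, HasDerivAt (fun t : ℝ => φ (t • x)) (D x) 1)
    (hφb : ∀ x, |φ x| ≤ C * (jb x ^ (2 * n))⁻¹) (hDb : ∀ x, |D x| ≤ C * (jb x ^ (2 * n))⁻¹) :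
    ∫ x, D x = -n * ∫ x, φ x := by
  have hC : 0 ≤ C := by
    have h1 := (abs_nonneg _).trans (hφb 0)
    have h2 : 0 < (jb (0 : EuclideanSpace ℝ (Fin n)) ^ (2 * n))⁻¹ := by
      have := jb_pos (0 : EuclideanSpace ℝ (Fin n)); positivity
    exact nonneg_of_mul_nonneg_left h1 h2
  have hder' : ∀ x, ∀ t ∈ Set.Ioo (1 / 2 : ℝ) 2,
      HasDerivAt (fun t : ℝ => φ (t • x)) (D (t • x) * t⁻¹) t := by
    intro x t ht
    have ht0 : t ≠ 0 := by have := ht.1; positivity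
    have h1 := hder (t • x)
    have h2 : HasDerivAt (fun s : ℝ => s * t⁻¹) (t⁻¹) t := by
      simpa using (hasDerivAt_id t).mul_const t⁻¹
    have h3 := HasDerivAt.comp_of_eq t h1 h2 (by field_simp)
    refine h3.congr_of_eventuallyEq (Filter.Eventually.of_forall fun s => ?_)
    simp only [Function.comp, smul_smul]
    congr 2
    field_simp
  have key := hasDerivAt_integral_of_dominated_loc_of_deriv_le (μ := volume)
    (F := fun (t : ℝ) x => φ (t • x)) (F' := fun (t : ℝ) x => D (t • x) * t⁻¹) (x₀ := 1)
    (s := Set.Ioo (1 / 2 : ℝ) 2) (bound := fun x => (C * 2 ^ (2 * n) * 2) * (jb x ^ (2 * n))⁻¹)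
    (Ioo_mem_nhds (by norm_num) (by norm_num))
    (Filter.Eventually.of_forall fun t => by
      apply Continuous.aestronglyMeasurable; fun_prop)
    ((integrable_jb hn C).mono' (by apply Continuous.aestronglyMeasurable; fun_prop)
      (Filter.Eventually.of_forall fun x => by simpa using hφb x))
    (by apply Continuous.aestronglyMeasurable; fun_prop)
    (Filter.Eventually.of_forall fun x t ht => by
      have h0 : 0 < t := by have := ht.1; linarith
      have h1 : t⁻¹ ≤ 2 := by
        rw [inv_le_comm₀ h0 (by norm_num)]; have := ht.1; linarith
      have h2 : (jb (t • x) ^ (2 * n))⁻¹ ≤ 2 ^ (2 * n) * (jb x ^ (2 * n))⁻¹ := by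
        have h3 : jb x ^ (2 * n) ≤ (2 * jb (t • x)) ^ (2 * n) :=
          pow_le_pow_left₀ (jb_pos x).le (jb_smul x t ht.1) _
        rw [mul_pow] at h3
        have := pow_pos (jb_pos x) (2 * n)
        have := pow_pos (jb_pos (t • x)) (2 * n)
        rw [← div_eq_mul_inv, le_div_iff₀ (by positivity), inv_mul_le_iff₀ (by positivity)]
        linarith
      rw [norm_mul, Real.norm_eq_abs, Real.norm_eq_abs, abs_of_pos (inv_pos.2 h0)]
      calc |D (t • x)| * t⁻¹ ≤ (C * (2 ^ (2 * n) * (jb x ^ (2 * n))⁻¹)) * 2 := by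
            have := jb_pos x
            gcongr
            exact (hDb _).trans (by gcongr)
        _ = _ := by ring)
    (integrable_jb hn _)
    (Filter.Eventually.of_forall hder')
  have k2 := key.2
  simp only [one_smul, inv_one, mul_one] at k2
  have k3 : HasDerivAt (fun t : ℝ => (t ^ n)⁻¹ * ∫ x, φ x) (-n * ∫ x, φ x) 1 := by
    have h := ((hasDerivAt_pow n (1 : ℝ)).inv (by simp)).mul_const (∫ x, φ x)
    simpa using h
  refine (k2.unique (k3.congr_of_eventuallyEq ?_))
  filter_upwards [Ioi_mem_nhds (show (0 : ℝ) < 1 by norm_num)] with t ht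
  have ht : 0 < t := ht
  rw [Measure.integral_comp_smul, smul_eq_mul, finrank_euclideanSpace, Fintype.card_fin,
    abs_of_pos (by positivity)]

/-- Lipschitz bound of the kernel along rays. -/
lemma kernel_lip {n : ℕ} (p : ℕ) (hp : 0 < p) (x y : EuclideanSpace ℝ (Fin n)) (t r : ℝ)
    (ht : t ∈ Set.Ioo (1 / 2 : ℝ) 2) (hr : r ∈ Set.Ioo (1 / 2 : ℝ) 2) :
    |‖t • x - y‖ ^ p - ‖r • x - y‖ ^ p| ≤ p * 3 ^ p * jb x ^ p * jb y ^ p * |t - r| := by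
  have hx := one_le_jb x
  have hy := one_le_jb y
  have hb : ∀ s ∈ Set.Ioo (1 / 2 : ℝ) 2, ‖s • x - y‖ ≤ 3 * jb x * jb y := by
    intro s hs
    have h0 : 0 < s := by have := hs.1; linarith
    calc ‖s • x - y‖ ≤ ‖s • x‖ + ‖y‖ := norm_sub_le _ _
      _ = s * ‖x‖ + ‖y‖ := by rw [norm_smul, Real.norm_eq_abs, abs_of_pos h0]
      _ ≤ 2 * jb x + jb y := by
          have := norm_le_jb x
          have := norm_le_jb y
          have := hs.2
          gcongr
      _ ≤ _ := by nlinarith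
  refine (abs_pow_sub_pow_le _ _ p).trans ?_
  have h1 : |‖t • x - y‖ - ‖r • x - y‖| ≤ |t - r| * jb x := by
    refine (abs_norm_sub_norm_le _ _).trans ?_
    rw [sub_sub_sub_cancel_right, ← sub_smul, norm_smul, Real.norm_eq_abs]
    gcongr
    exact norm_le_jb x
  have h2 : max |‖t • x - y‖| |‖r • x - y‖| ≤ 3 * jb x * jb y := by
    rw [abs_norm, abs_norm]
    exact max_le (hb t ht) (hb r hr)
  calc _ ≤ (|t - r| * jb x) * p * (3 * jb x * jb y) ^ (p - 1) := by gcongr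
    _ ≤ (|t - r| * (3 * jb x * jb y)) * p * (3 * jb x * jb y) ^ (p - 1) := by
        have : jb x ≤ 3 * jb x * jb y := by nlinarith
        gcongr
    _ = |t - r| * p * ((3 * jb x * jb y) ^ (p - 1) * (3 * jb x * jb y)) := by ring
    _ = _ := by rw [← pow_succ, Nat.sub_add_cancel hp, mul_pow, mul_pow]; ring

lemma decay_mul {n p : ℕ} (C : ℝ) (F : EuclideanSpace ℝ (Fin n) → ℝ)
    (hFb : ∀ x, |F x| ≤ C * (jb x ^ (2 * n + p))⁻¹) (C' : ℝ) (v : EuclideanSpace ℝ (Fin n) → ℝ)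
    (hv : ∀ x, |v x| ≤ C' * jb x ^ p) (x : EuclideanSpace ℝ (Fin n)) :
    |F x * v x| ≤ C * C' * (jb x ^ (2 * n))⁻¹ := by
  have h := jb_pos x
  rw [abs_mul]
  calc _ ≤ (C * (jb x ^ (2 * n + p))⁻¹) * (C' * jb x ^ p) :=
        mul_le_mul (hFb x) (hv x) (abs_nonneg _) ((abs_nonneg _).trans (hFb x))
    _ = _ := by rw [pow_add]; field_simp

lemma integrable_decay {n p : ℕ} (hn : 0 < n) (C : ℝ) (F : EuclideanSpace ℝ (Fin n) → ℝ)
    (hF : Continuous F)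
    (hFb : ∀ x, |F x| ≤ C * (jb x ^ (2 * n + p))⁻¹) (C' : ℝ) (v : EuclideanSpace ℝ (Fin n) → ℝ)
    (hvc : Continuous v) (hv : ∀ x, |v x| ≤ C' * jb x ^ p) :
    Integrable (fun x => F x * v x) :=
  (integrable_jb hn (C * C')).mono' (hF.mul hvc).aestronglyMeasurable
    (Filter.Eventually.of_forall fun x => decay_mul C F hFb C' v hv x)

lemma norm_smul_sub_le {n : ℕ} (x y : EuclideanSpace ℝ (Fin n)) (t : ℝ) :
    ‖t • x - y‖ ≤ (|t| + 1) * jb x * jb y := by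
  have hx := one_le_jb x
  have hy := one_le_jb y
  calc ‖t • x - y‖ ≤ ‖t • x‖ + ‖y‖ := norm_sub_le _ _
    _ = |t| * ‖x‖ + ‖y‖ := by rw [norm_smul, Real.norm_eq_abs]
    _ ≤ |t| * jb x + jb y := by
        have := norm_le_jb x
        have := norm_le_jb y
        gcongr
    _ ≤ |t| * (jb x * jb y) + jb x * jb y := by
        have : jb x ≤ jb x * jb y := by nlinarith
        have : jb y ≤ jb x * jb y := by nlinarith
        gcongr
    _ = _ := by ring

set_option maxHeartbeats 1000000 in
/-- Symmetry of the kernel under dilations. -/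
lemma potential_identity {n : ℕ} (hn : 0 < n) (p : ℕ) (hp : 0 < p)
    (u D F : EuclideanSpace ℝ (Fin n) → ℝ) (C γ : ℝ)
    (hu : Continuous u) (hD : Continuous D) (hF : Continuous F)
    (hder : ∀ x, HasDerivAt (fun t : ℝ => u (t • x)) (D x) 1)
    (hFb : ∀ x, |F x| ≤ C * (jb x ^ (2 * n + p))⁻¹)
    (hueq : ∀ x, u x = γ * ∫ y, ‖x - y‖ ^ p * F y) (Cu : ℝ) (hub : ∀ x, |u x| ≤ Cu * jb x ^ p) :
    (∃ L : ℝ, ∀ x, |D x| ≤ L * jb x ^ p) ∧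
      ∫ x, F x * D x = p / 2 * ∫ x, F x * u x := by
  have hint : ∀ (x : EuclideanSpace ℝ (Fin n)) (t : ℝ), Integrable (fun y => ‖t • x - y‖ ^ p * F y) := by
    intro x t
    have := integrable_decay hn C F hF hFb (((|t| + 1) * jb x) ^ p) (fun y => ‖t • x - y‖ ^ p)
      (by fun_prop) (fun y => by
        rw [abs_of_nonneg (by positivity), ← mul_pow]
        exact pow_le_pow_left₀ (norm_nonneg _) (norm_smul_sub_le x y t) _)
    simpa only [mul_comm] using this
  have hjF : Integrable (fun y => |F y| * jb y ^ p) :=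
    integrable_decay hn C (fun y => |F y|) hF.abs (by simpa using hFb) 1 (fun y => jb y ^ p)
      (continuous_jb.pow _) (fun y => by
        rw [abs_of_nonneg (by have := jb_pos y; positivity), one_mul])
  set M : ℝ := ∫ y, |F y| * jb y ^ p with hM
  have hM0 : 0 ≤ M := integral_nonneg fun y => by have := jb_pos y; positivity
  set L : ℝ := |γ| * (p * 3 ^ p * M) with hL
  have hL0 : 0 ≤ L := by positivity
  clear_value L M
  have hlip : ∀ x, ∀ t ∈ Set.Ioo (1 / 2 : ℝ) 2, ∀ r ∈ Set.Ioo (1 / 2 : ℝ) 2,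
      |u (t • x) - u (r • x)| ≤ L * jb x ^ p * |t - r| := by
    intro x t ht r hr
    rw [hueq, hueq, ← mul_sub, ← integral_sub (hint x t) (hint x r), abs_mul]
    have h1 : |∫ y, (‖t • x - y‖ ^ p * F y - ‖r • x - y‖ ^ p * F y)| ≤
        ∫ y, (p * 3 ^ p * jb x ^ p * |t - r|) * (|F y| * jb y ^ p) := by
      rw [← Real.norm_eq_abs]
      refine norm_integral_le_of_norm_le (hjF.const_mul _) (Filter.Eventually.of_forall fun y => ?_)
      rw [← sub_mul, norm_mul, Real.norm_eq_abs, Real.norm_eq_abs]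
      calc _ ≤ (p * 3 ^ p * jb x ^ p * jb y ^ p * |t - r|) * |F y| := by
            gcongr
            exact kernel_lip p hp x y t r ht hr
        _ = _ := by ring
    rw [integral_const_mul, ← hM] at h1
    calc _ ≤ |γ| * ((p * 3 ^ p * jb x ^ p * |t - r|) * M) := by gcongr
      _ = _ := by rw [hL]; ring
  have hnh : Set.Ioo (1 / 2 : ℝ) 2 ∈ nhds (1 : ℝ) := Ioo_mem_nhds (by norm_num) (by norm_num)
  have hDb : ∀ x, |D x| ≤ L * jb x ^ p := by
    intro x
    have := jb_pos x
    have hC0 : 0 ≤ L * jb x ^ p := mul_nonneg hL0 (pow_nonneg this.le _)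
    rw [← Real.norm_eq_abs]
    refine HasDerivAt.le_of_lip' (hder x) hC0 ?_
    filter_upwards [hnh] with t ht
    have h1 : (1 : ℝ) ∈ Set.Ioo (1 / 2 : ℝ) 2 := ⟨by norm_num, by norm_num⟩
    have h2 := hlip x t ht 1 h1
    rw [Real.norm_eq_abs, Real.norm_eq_abs]
    exact h2
  refine ⟨⟨L, hDb⟩, ?_⟩
  -- the functional
  have key := hasDerivAt_integral_of_dominated_loc_of_lip (μ := volume)
    (F := fun (t : ℝ) x => F x * u (t • x)) (F' := fun x => F x * D x) (x₀ := 1)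
    (s := Set.Ioo (1 / 2 : ℝ) 2) (bound := fun x => L * (|F x| * jb x ^ p))
    hnh
    (Filter.Eventually.of_forall fun t => by
      apply Continuous.aestronglyMeasurable; fun_prop)
    (by simpa using integrable_decay hn C F hF hFb Cu u hu hub)
    (hF.mul hD).aestronglyMeasurable
    (Filter.Eventually.of_forall fun x => by
      apply LipschitzOnWith.of_dist_le_mul
      intro t ht r hr
      have := jb_pos x
      rw [Real.dist_eq, Real.dist_eq, ← mul_sub, abs_mul, Real.coe_nnabs,
        abs_of_nonneg (a := L * (|F x| * jb x ^ p)) (mul_nonneg hL0 (by positivity))]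
      calc _ ≤ |F x| * (L * jb x ^ p * |t - r|) := by
            gcongr
            exact hlip x t ht r hr
        _ = _ := by ring)
    (hjF.const_mul L)
    (Filter.Eventually.of_forall fun x => (hder x).const_mul (F x))
  have k2 := key.2
  set G : ℝ → ℝ := fun t => ∫ x, F x * u (t • x) with hG
  have hsym : ∀ t : ℝ, 0 < t → G t = t ^ p * G t⁻¹ := by
    intro t ht
    have e1 : ∀ s : ℝ, G s = γ * ∫ x, ∫ y, F x * (‖s • x - y‖ ^ p * F y) := by
      intro s
      simp only [hG]
      rw [← integral_const_mul]
      congr 1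
      ext x
      rw [hueq, integral_const_mul]
      ring
    rw [e1 t, e1 t⁻¹, integral_integral_swap]
    · rw [mul_left_comm]
      congr 1
      rw [← integral_const_mul]
      refine integral_congr_ae (Filter.Eventually.of_forall fun y => ?_)
      simp only
      rw [← integral_const_mul]
      refine integral_congr_ae (Filter.Eventually.of_forall fun x => ?_)
      simp only
      have : ‖t • x - y‖ = t * ‖t⁻¹ • y - x‖ := by
        rw [← abs_of_pos ht, ← Real.norm_eq_abs, ← norm_smul, smul_sub, smul_smul,
          Real.norm_eq_abs, abs_of_pos ht, mul_inv_cancel₀ ht.ne', one_smul, norm_sub_rev]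
      rw [this, mul_pow]
      ring
    · have hprod := (hjF.mul_prod hjF).const_mul ((|t| + 1) ^ p)
      refine hprod.mono' ?_ (Filter.Eventually.of_forall fun z => ?_)
      · apply Continuous.aestronglyMeasurable
        unfold Function.uncurry
        fun_prop
      · simp only [Function.uncurry]
        rw [norm_mul, norm_mul, Real.norm_eq_abs, Real.norm_eq_abs, Real.norm_eq_abs,
          abs_of_nonneg (a := ‖t • z.1 - z.2‖ ^ p) (by positivity)]
        calc _ ≤ |F z.1| * (((|t| + 1) * jb z.1 * jb z.2) ^ p * |F z.2|) := by
              gcongr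
              exact norm_smul_sub_le _ _ _
          _ = _ := by rw [mul_pow, mul_pow]; ring
  have k3 : HasDerivAt (fun t : ℝ => t ^ p * G t⁻¹)
      (p * G 1 + -∫ x, F x * D x) 1 := by
    have h1 : HasDerivAt (fun t : ℝ => t⁻¹) (-1) 1 := by
      simpa using hasDerivAt_inv (one_ne_zero (α := ℝ))
    have h2 := HasDerivAt.comp_of_eq (1 : ℝ) k2 h1 (by simp)
    have h3 := (hasDerivAt_pow p (1 : ℝ)).mul h2
    refine HasDerivAt.congr_deriv (f := fun t : ℝ => t ^ p * G t⁻¹) h3 ?_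
    simp
  have k4 := k2.unique (k3.congr_of_eventuallyEq (by
    filter_upwards [Ioi_mem_nhds (show (0 : ℝ) < 1 by norm_num)] with t ht
    exact hsym t ht))
  have hG1 : G 1 = ∫ x, F x * u x := by simp [hG]
  rw [hG1] at k4
  linarith

lemma hasDerivAt_f {n : ℕ} (x : EuclideanSpace ℝ (Fin n)) :
    HasDerivAt (fun t : ℝ => 2 / (1 + ‖t • x‖ ^ 2))
      (-(2 / (1 + ‖x‖ ^ 2)) * (1 - (1 - ‖x‖ ^ 2) / (1 + ‖x‖ ^ 2))) 1 := by
  have h0 : (1 + ‖x‖ ^ 2) ≠ 0 := by positivity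
  have h1 : HasDerivAt (fun t : ℝ => 1 + t ^ 2 * ‖x‖ ^ 2) (2 * ‖x‖ ^ 2) 1 := by
    simpa using ((hasDerivAt_pow 2 (1 : ℝ)).mul_const (‖x‖ ^ 2)).const_add 1
  have h2 := (hasDerivAt_const (1 : ℝ) (2 : ℝ)).div h1 (by simpa using h0)
  have h3 : (fun t : ℝ => 2 / (1 + ‖t • x‖ ^ 2)) = fun t : ℝ => 2 / (1 + t ^ 2 * ‖x‖ ^ 2) := by
    ext t
    rw [norm_smul, mul_pow, Real.norm_eq_abs, sq_abs]
  rw [h3]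
  refine h2.congr_deriv ?_
  field_simp
  ring

/-- Pohozaev identity for solutions of the integral equation
`u(x) = γ ∫ |x−y|^{2m−n} F_{ε,u}(y) dy`:
`ε m (1−α) ∫ f^{2m} u² (1−|x|²)/(1+|x|²) = c_α ∫ f^{−c_α} u^{1−α} (1−|x|²)/(1+|x|²)`,
both integrals converging absolutely. -/
theorem stmt7 (n m : ℕ) (hn : 3 ≤ n) (hodd : Odd n) (hmn : n < 2 * m)
    (ε : ℝ) (hε0 : 0 ≤ ε) (hε1 : ε < 1)
    (α : ℝ) (hα0 : 0 < α) (hαc : α ≤ (2 * (m : ℝ) + n) / (2 * (m : ℝ) - n)) (hα1 : α ≠ 1)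
    (γ : ℝ) (hγ : 0 < γ)
    (u : EuclideanSpace ℝ (Fin n) → ℝ) (husm : ContDiff ℝ (⊤ : ℕ∞) u)
    (hupos : ∀ x, 0 < u x)
    (hbound : ∃ c : ℝ, 0 < c ∧ ∀ x,
      c⁻¹ * (1 + ‖x‖ ^ 2) ^ ((2 * (m : ℝ) - n) / 2) ≤ u x ∧
        u x ≤ c * (1 + ‖x‖ ^ 2) ^ ((2 * (m : ℝ) - n) / 2))
    (hueq : ∀ x, u x = γ * ∫ y, ‖x - y‖ ^ (2 * m - n) * sphF n m ε α u y) :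
    Integrable (fun x : EuclideanSpace ℝ (Fin n) =>
      (2 / (1 + ‖x‖ ^ 2)) ^ (2 * m) * u x ^ 2 * ((1 - ‖x‖ ^ 2) / (1 + ‖x‖ ^ 2))) ∧
    Integrable (fun x : EuclideanSpace ℝ (Fin n) =>
      (2 / (1 + ‖x‖ ^ 2)) ^ (-(cAlpha n m α)) * u x ^ (1 - α) *
        ((1 - ‖x‖ ^ 2) / (1 + ‖x‖ ^ 2))) ∧
    ε * m * (1 - α) * ∫ x : EuclideanSpace ℝ (Fin n),
        (2 / (1 + ‖x‖ ^ 2)) ^ (2 * m) * u x ^ 2 * ((1 - ‖x‖ ^ 2) / (1 + ‖x‖ ^ 2)) =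
      cAlpha n m α * ∫ x : EuclideanSpace ℝ (Fin n),
        (2 / (1 + ‖x‖ ^ 2)) ^ (-(cAlpha n m α)) * u x ^ (1 - α) *
          ((1 - ‖x‖ ^ 2) / (1 + ‖x‖ ^ 2)) := by
  obtain ⟨c, hc, hcb⟩ := hbound
  set p : ℕ := 2 * m - n with hp
  have hp0 : 0 < p := by omega
  have hpm : 2 * m = n + p := by omega
  have hpR : (2 * (m : ℝ)) = n + p := by exact_mod_cast hpm
  have hn0 : 0 < n := by omega
  have hcu : Continuous u := husm.continuous
  set f : EuclideanSpace ℝ (Fin n) → ℝ := fun x => 2 / (1 + ‖x‖ ^ 2) with hf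
  have hfpos : ∀ x, 0 < f x := fun x => by simp only [hf]; positivity
  have hfc : Continuous f := by
    simp only [hf]
    exact continuous_const.div (by fun_prop) (fun x => by positivity)
  set h : EuclideanSpace ℝ (Fin n) → ℝ := fun x => (1 - ‖x‖ ^ 2) / (1 + ‖x‖ ^ 2) with hh
  have hhc : Continuous h := by
    simp only [hh]
    exact Continuous.div (by fun_prop) (by fun_prop) (fun x => by positivity)
  have hhb : ∀ x, |h x| ≤ 1 := by
    intro x
    simp only [hh]
    have : 0 < 1 + ‖x‖ ^ 2 := by positivity
    rw [abs_div, abs_of_pos this, div_le_one this, abs_le]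
    constructor <;> nlinarith [sq_nonneg ‖x‖]
  set q : ℝ := -(cAlpha n m α) with hq
  have hq' : q = ((n : ℝ) + 2 * m) / 2 + α * ((n : ℝ) - 2 * m) / 2 := by
    rw [hq, cAlpha]; ring
  have hfj : ∀ x, f x = 2 * (jb x ^ 2)⁻¹ := fun x => by rw [jb_sq]; rfl
  -- bounds on u
  have hub : ∀ x, |u x| ≤ c * jb x ^ p := by
    intro x
    rw [abs_of_pos (hupos x), ← jb_rpow]
    convert (hcb x).2 using 3
    rw [hpR]; ring
  have hlb : ∀ x, c⁻¹ * jb x ^ p ≤ u x := by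
    intro x
    rw [← jb_rpow]
    convert (hcb x).1 using 3
    rw [hpR]; ring
  set D : EuclideanSpace ℝ (Fin n) → ℝ := fun x => fderiv ℝ u x x with hD
  have hDc : Continuous D := by
    have := husm.continuous_fderiv (by simp)
    exact this.clm_apply continuous_id
  have hder : ∀ x, HasDerivAt (fun t : ℝ => u (t • x)) (D x) 1 := by
    intro x
    have h1 : HasFDerivAt u (fderiv ℝ u x) ((1 : ℝ) • x) := by
      rw [one_smul]
      exact (husm.differentiable (by simp) x).hasFDerivAt
    have h2 : HasDerivAt (fun t : ℝ => t • x) x 1 := by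
      simpa using (hasDerivAt_id (1 : ℝ)).smul_const x
    exact h1.comp_hasDerivAt 1 h2
  set F1 : EuclideanSpace ℝ (Fin n) → ℝ := fun x => f x ^ (2 * m) * u x with hF1
  set F2 : EuclideanSpace ℝ (Fin n) → ℝ := fun x => f x ^ q * u x ^ (-α) with hF2
  have hF1c : Continuous F1 := (hfc.pow _).mul hcu
  have hF2c : Continuous F2 :=
    (hfc.rpow_const fun x => Or.inl (hfpos x).ne').mul
      (hcu.rpow_const fun x => Or.inl (hupos x).ne')
  have hF1b : ∀ x, |F1 x| ≤ (2 ^ (2 * m) * c) * (jb x ^ (2 * n + p))⁻¹ := by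
    intro x
    have hj := jb_pos x
    simp only [hF1]
    rw [abs_mul, abs_of_pos (pow_pos (hfpos x) _), hfj]
    calc _ ≤ (2 * (jb x ^ 2)⁻¹) ^ (2 * m) * (c * jb x ^ p) := by gcongr; exact hub x
      _ = _ := by
        rw [hpm, mul_pow, inv_pow, ← pow_mul,
          show 2 * (n + p) = (2 * n + p) + p by ring, pow_add (jb x)]
        field_simp
  have hF2b : ∀ x, |F2 x| ≤ (2 ^ q * c ^ α) * (jb x ^ (2 * n + p))⁻¹ := by
    intro x
    have hj := jb_pos x
    have hu0 := hupos x
    have hf0 := hfpos x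
    simp only [hF2]
    rw [abs_of_pos (by positivity)]
    have h1 : u x ^ (-α) ≤ (c⁻¹ * jb x ^ p) ^ (-α) :=
      Real.rpow_le_rpow_of_nonpos (by positivity) (hlb x) (by linarith)
    calc _ ≤ f x ^ q * (c⁻¹ * jb x ^ p) ^ (-α) := by gcongr
      _ = (2 ^ q * c ^ α) * (jb x ^ (-(2 * q)) * jb x ^ (-(p * α))) := by
        rw [hfj, Real.mul_rpow (by positivity) (by positivity),
          Real.mul_rpow (by positivity) (by positivity), Real.inv_rpow (by positivity),
          Real.inv_rpow (by positivity), Real.rpow_neg hc.le, inv_inv, ← Real.rpow_natCast (jb x) 2,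
          ← Real.rpow_natCast (jb x) p, ← Real.rpow_mul hj.le, ← Real.rpow_mul hj.le,
          ← Real.rpow_neg hj.le]
        push_cast
        ring_nf
      _ = _ := by
        rw [← Real.rpow_add hj, ← Real.rpow_natCast, ← Real.rpow_neg hj.le]
        congr 2
        rw [hq', hpR]
        push_cast
        ring
  set K1 : ℝ := 2 ^ (2 * m) * c
  set K2 : ℝ := 2 ^ q * c ^ α
  have hFeq : ∀ x, sphF n m ε α u x = ε * F1 x + F2 x := by
    intro x
    simp only [sphF, hF1, hF2, hf, hq']
    ring
  have hFb : ∀ x, |ε * F1 x + F2 x| ≤ (ε * K1 + K2) * (jb x ^ (2 * n + p))⁻¹ := by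
    intro x
    calc _ ≤ |ε * F1 x| + |F2 x| := abs_add_le _ _
      _ = ε * |F1 x| + |F2 x| := by rw [abs_mul, abs_of_nonneg hε0]
      _ ≤ ε * (K1 * (jb x ^ (2 * n + p))⁻¹) + K2 * (jb x ^ (2 * n + p))⁻¹ := by
        gcongr
        · exact hF1b x
        · exact hF2b x
      _ = _ := by ring
  simp only [hFeq] at hueq
  obtain ⟨⟨L, hDb⟩, hpoh⟩ := potential_identity hn0 p hp0 u D (fun x => ε * F1 x + F2 x) _ γ hcu hDc
    (by fun_prop) hder hFb hueq c hub
  -- integrability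
  have i1 := integrable_decay hn0 _ F1 hF1c hF1b c u hcu hub
  have i2 := integrable_decay hn0 _ F2 hF2c hF2b c u hcu hub
  have d1 := integrable_decay hn0 _ F1 hF1c hF1b L D hDc hDb
  have d2 := integrable_decay hn0 _ F2 hF2c hF2b L D hDc hDb
  have huhb : ∀ x, |u x * h x| ≤ c * jb x ^ p := by
    intro x
    rw [abs_mul]
    calc _ ≤ |u x| * 1 := by gcongr; exact hhb x
      _ ≤ _ := by rw [mul_one]; exact hub x
  have a1 := integrable_decay hn0 _ F1 hF1c hF1b c (fun x => u x * h x) (hcu.mul hhc) huhb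
  have a2 := integrable_decay hn0 _ F2 hF2c hF2b c (fun x => u x * h x) (hcu.mul hhc) huhb
  have e1 : ∀ x, f x ^ (2 * m) * u x ^ 2 * h x = F1 x * (u x * h x) := by
    intro x; simp only [hF1]; ring
  have hpow : ∀ x, u x ^ (1 - α) = u x ^ (-α) * u x := by
    intro x
    rw [show 1 - α = -α + 1 by ring, Real.rpow_add_one (hupos x).ne']
  have e2 : ∀ x, f x ^ q * u x ^ (1 - α) * h x = F2 x * (u x * h x) := by
    intro x; simp only [hF2, hpow]; ring
  -- integration by parts
  have hgen : ∀ (F : EuclideanSpace ℝ (Fin n) → ℝ) (K A B : ℝ), Continuous F →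
      (∀ x, |F x| ≤ K * (jb x ^ (2 * n + p))⁻¹) →
      (∀ x, HasDerivAt (fun t : ℝ => F (t • x) * u (t • x))
        (F x * (A * u x + A * -1 * (u x * h x) + B * D x)) 1) →
      A * (∫ x, F x * u x) - A * (∫ x, F x * (u x * h x)) + B * (∫ x, F x * D x)
        = -n * ∫ x, F x * u x := by
    intro F K A B hFc hFb' hd
    have j1 := integrable_decay hn0 _ F hFc hFb' c u hcu hub
    have j2 := integrable_decay hn0 _ F hFc hFb' c (fun x => u x * h x) (hcu.mul hhc) huhb
    have j3 := integrable_decay hn0 _ F hFc hFb' L D hDc hDb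
    have hvb : ∀ x, |A * u x + A * -1 * (u x * h x) + B * D x| ≤
        (|A| * c + |A| * c + |B| * L) * jb x ^ p := by
      intro x
      calc _ ≤ |A * u x| + |A * -1 * (u x * h x)| + |B * D x| := abs_add_three _ _ _
        _ = |A| * |u x| + |A| * |u x * h x| + |B| * |D x| := by
          simp [abs_mul]
        _ ≤ |A| * (c * jb x ^ p) + |A| * (c * jb x ^ p) + |B| * (L * jb x ^ p) := by
          gcongr
          · exact hub x
          · exact huhb x
          · exact hDb x
        _ = _ := by ring
    have b1 := decay_mul _ F hFb' _ _ hub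
    have b2 := decay_mul _ F hFb' _ _ hvb
    have hKpos : ∀ x : EuclideanSpace ℝ (Fin n), 0 ≤ (jb x ^ (2 * n))⁻¹ := fun x => by
      have := jb_pos x; positivity
    have := dilation_ibp hn0 (fun x => F x * u x) _
      (max (K * c) (K * (|A| * c + |A| * c + |B| * L)))
      (hFc.mul hcu) (by fun_prop) hd
      (fun x => (b1 x).trans (mul_le_mul_of_nonneg_right (le_max_left _ _) (hKpos x)))
      (fun x => (b2 x).trans (mul_le_mul_of_nonneg_right (le_max_right _ _) (hKpos x)))
    rw [← this]
    have e : ∀ x, F x * (A * u x + A * -1 * (u x * h x) + B * D x) =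
        A * (F x * u x) - A * (F x * (u x * h x)) + B * (F x * D x) := fun x => by ring
    simp only [e]
    have j4 : Integrable (fun x => A * (F x * u x) - A * (F x * (u x * h x))) :=
      (j1.const_mul A).sub (j2.const_mul A)
    rw [integral_add j4 (j3.const_mul B),
      integral_sub (j1.const_mul A) (j2.const_mul A), integral_const_mul, integral_const_mul,
      integral_const_mul]
  have hfd : ∀ x, HasDerivAt (fun t : ℝ => f (t • x)) (-(f x) * (1 - h x)) 1 := hasDerivAt_f
  have g1 := hgen F1 K1 (-(2 * m)) 2 hF1c hF1b (by
    intro x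
    have h1 := ((hfd x).fun_pow (2 * m)).mul ((hder x).fun_pow 2)
    have hm : 2 * m - 1 + 1 = 2 * m := by omega
    refine (h1.congr_deriv ?_).congr_of_eventuallyEq (Filter.Eventually.of_forall fun t => ?_)
    · simp only [hF1, one_smul]
      have hs : f x ^ (2 * m) = f x ^ (2 * m - 1) * f x := by rw [← pow_succ, hm]
      rw [hs]
      push_cast
      ring
    · simp only [hF1, Pi.mul_apply]
      ring)
  have g2 := hgen F2 K2 (-q) (1 - α) hF2c hF2b (by
    intro x
    have h1 := ((hfd x).rpow_const (p := q) (Or.inl (by simpa using (hfpos x).ne'))).mul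
      ((hder x).rpow_const (p := 1 - α) (Or.inl (by simpa using (hupos x).ne')))
    refine (h1.congr_deriv ?_).congr_of_eventuallyEq (Filter.Eventually.of_forall fun t => ?_)
    · simp only [hF2, one_smul]
      rw [show 1 - α - 1 = -α by ring, hpow, Real.rpow_sub_one (hfpos x).ne']
      have := (hfpos x).ne'
      field_simp
      ring
    · simp only [hF2, Pi.mul_apply, hpow]
      ring)
  have t1 : ∫ x, (ε * F1 x + F2 x) * D x = ε * (∫ x, F1 x * D x) + ∫ x, F2 x * D x := by
    rw [← integral_const_mul, ← integral_add (d1.const_mul ε) d2]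
    congr 1; ext x; ring
  have t2 : ∫ x, (ε * F1 x + F2 x) * u x = ε * (∫ x, F1 x * u x) + ∫ x, F2 x * u x := by
    rw [← integral_const_mul, ← integral_add (i1.const_mul ε) i2]
    congr 1; ext x; ring
  rw [t1, t2] at hpoh
  change Integrable (fun x => f x ^ (2 * m) * u x ^ 2 * h x) ∧
    Integrable (fun x => f x ^ q * u x ^ (1 - α) * h x) ∧
    ε * m * (1 - α) * ∫ x, f x ^ (2 * m) * u x ^ 2 * h x =
      cAlpha n m α * ∫ x, f x ^ q * u x ^ (1 - α) * h x
  simp only [e1, e2]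
  refine ⟨a1, a2, ?_⟩
  have hcA : cAlpha n m α = -q := by rw [hq]; ring
  rw [hcA]
  generalize (∫ x, F1 x * u x) = I1 at *
  generalize (∫ x, F2 x * u x) = I2 at *
  generalize (∫ x, F1 x * D x) = D1 at *
  generalize (∫ x, F2 x * D x) = D2 at *
  generalize (∫ x, F1 x * (u x * h x)) = A1 at *
  generalize (∫ x, F2 x * (u x * h x)) = A2 at *
  have hpR' : (p : ℝ) = 2 * m - n := by linarith
  rw [hpR'] at hpoh
  rw [hq'] at g2 ⊢
  linear_combination (ε * (1 - α) / 2) * g1 + g2 - (1 - α) * hpoh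
end

section
/- Let (F_k) be a sequence of nonnegative measurable functions on ℝⁿ with ∫_{ℝⁿ} F_k(y) dy = 1 for every k, and suppose that for every δ > 0 one has ∫_{{|y| ≥ δ}} (1+|y|^{2m−n}) F_k(y) dy → 0 as k → ∞. Define ũ_k(x) := ∫_{ℝⁿ} |x−y|^{2m−n} F_k(y) dy. Then (i) ũ_k converges to the function x ↦ |x|^{2m−n} uniformly on every compact subset of ℝⁿ, and (ii) there exist a constant C > 0 and an index k₀ such that C^{−1}|x|^{2m−n} ≤ ũ_k(x) ≤ C|x|^{2m−n} for all x with |x| ≥ 1 and all k ≥ k₀. -/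
open MeasureTheory Filter
open scoped Topology

theorem aux_add_pow (p : ℕ) (a b : ℝ) (ha : 0 ≤ a) (hb : 0 ≤ b) :
    (a + b) ^ p ≤ 2 ^ p * (a ^ p + b ^ p) := by
  refine (add_pow_le ha hb p).trans ?_
  have : (2:ℝ) ^ (p - 1) ≤ 2 ^ p := pow_le_pow_right₀ (by norm_num) (by omega)
  gcongr

theorem aux_near (p : ℕ) {E : Type*} [NormedAddCommGroup E] (x y : E) (δ : ℝ)
    (h1 : δ ≤ 1) (hy : ‖y‖ ≤ δ) :
    |‖x - y‖ ^ p - ‖x‖ ^ p| ≤ (p + 2) * 2 ^ p * (1 + ‖x‖ ^ p) * δ := by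
  have hδ : 0 ≤ δ := (norm_nonneg y).trans hy
  have hx := norm_nonneg x
  have h := abs_pow_sub_pow_le ‖x - y‖ ‖x‖ p
  have ha : |‖x - y‖ - ‖x‖| ≤ δ := by
    have := abs_norm_sub_norm_le (x - y) x
    have h2 : ‖x - y - x‖ = ‖y‖ := by rw [sub_right_comm]; simp
    linarith
  have hb : max |‖x - y‖| |‖x‖| ≤ 1 + ‖x‖ := by
    rw [abs_of_nonneg (norm_nonneg _), abs_of_nonneg hx]
    apply max_le
    · have := norm_sub_le x y
      linarith
    · linarith
  have hc : (max |‖x - y‖| |‖x‖|) ^ (p - 1) ≤ (1 + ‖x‖) ^ p := by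
    calc _ ≤ (1 + ‖x‖) ^ (p - 1) := by gcongr
      _ ≤ _ := pow_le_pow_right₀ (by linarith) (by omega)
  have hd := aux_add_pow p 1 ‖x‖ (by norm_num) hx
  rw [one_pow] at hd
  calc _ ≤ _ := h
    _ ≤ δ * p * (2 ^ p * (1 + ‖x‖ ^ p)) := by
        have := hc.trans hd
        gcongr
    _ ≤ δ * (p + 2) * (2 ^ p * (1 + ‖x‖ ^ p)) := by
        gcongr
        linarith
    _ = _ := by ring

theorem aux_far (p : ℕ) {E : Type*} [NormedAddCommGroup E] (x y : E) :
    |‖x - y‖ ^ p - ‖x‖ ^ p| ≤ (p + 2) * 2 ^ p * (1 + ‖x‖ ^ p) * (1 + ‖y‖ ^ p) := by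
  have hX : 0 ≤ ‖x‖ ^ p := by positivity
  have hY : 0 ≤ ‖y‖ ^ p := by positivity
  have h2 : (1:ℝ) ≤ 2 ^ p := one_le_pow₀ (by norm_num)
  have h1 : ‖x - y‖ ^ p ≤ 2 ^ p * (‖x‖ ^ p + ‖y‖ ^ p) :=
    (pow_le_pow_left₀ (norm_nonneg _) (norm_sub_le x y) p).trans
      (aux_add_pow p _ _ (norm_nonneg _) (norm_nonneg _))
  have h0 : 0 ≤ ‖x - y‖ ^ p := by positivity
  have hA : |‖x - y‖ ^ p - ‖x‖ ^ p| ≤ 2 * 2 ^ p * ((1 + ‖x‖ ^ p) * (1 + ‖y‖ ^ p)) := by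
    rw [abs_le]
    constructor <;> nlinarith [mul_nonneg hX hY, mul_nonneg (by positivity : (0:ℝ) ≤ 2 ^ p) (mul_nonneg hX hY),
      mul_nonneg (by positivity : (0:ℝ) ≤ 2 ^ p) hX, mul_nonneg (by positivity : (0:ℝ) ≤ 2 ^ p) hY,
      mul_nonneg (sub_nonneg.2 h2) hX]
  refine hA.trans ?_
  rw [mul_assoc ((p + 2 : ℝ) * 2 ^ p)]
  gcongr
  linarith [(Nat.cast_nonneg p : (0:ℝ) ≤ p)]

theorem aux_est (n p : ℕ) (f : EuclideanSpace ℝ (Fin n) → ℝ)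
    (hm : Measurable f) (hpos : ∀ y, 0 ≤ f y)
    (hint : Integrable (fun y : EuclideanSpace ℝ (Fin n) => (1 + ‖y‖ ^ p) * f y))
    (hone : ∫ y, f y = 1) (δ : ℝ) (hδ : 0 < δ) (h1 : δ ≤ 1) (x : EuclideanSpace ℝ (Fin n)) :
    |(∫ y, ‖x - y‖ ^ p * f y) - ‖x‖ ^ p| ≤ (p + 2) * 2 ^ p * (1 + ‖x‖ ^ p) *
      (δ + ∫ y in {y : EuclideanSpace ℝ (Fin n) | δ ≤ ‖y‖}, (1 + ‖y‖ ^ p) * f y) := by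
  have hS : MeasurableSet {y : EuclideanSpace ℝ (Fin n) | δ ≤ ‖y‖} :=
    measurableSet_le measurable_const measurable_norm
  have hf : Integrable f := by
    refine hint.mono' hm.aestronglyMeasurable (ae_of_all _ fun y => ?_)
    rw [Real.norm_of_nonneg (hpos y)]
    have : 0 ≤ ‖y‖ ^ p * f y := mul_nonneg (by positivity) (hpos y)
    linarith
  set A : ℝ := (p + 2) * 2 ^ p * (1 + ‖x‖ ^ p) with hA
  have hA0 : 0 ≤ A := by positivity
  have hd : Integrable (fun y => (‖x - y‖ ^ p - ‖x‖ ^ p) * f y) := by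
    refine (hint.const_mul A).mono' ?_ (ae_of_all _ fun y => ?_)
    · exact (by fun_prop : Measurable _).aestronglyMeasurable
    · rw [norm_mul, Real.norm_of_nonneg (hpos y), Real.norm_eq_abs, ← mul_assoc]
      exact mul_le_mul_of_nonneg_right (aux_far p x y) (hpos y)
  have hg : Integrable (fun y => A * (δ * f y +
      Set.indicator {y : EuclideanSpace ℝ (Fin n) | δ ≤ ‖y‖}
        (fun y => (1 + ‖y‖ ^ p) * f y) y)) :=
    ((hf.const_mul δ).add (hint.indicator hS)).const_mul A
  have e1 : (∫ y, ‖x - y‖ ^ p * f y) - ‖x‖ ^ p = ∫ y, (‖x - y‖ ^ p - ‖x‖ ^ p) * f y := by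
    have : (fun y => ‖x - y‖ ^ p * f y) =
        fun y => (‖x - y‖ ^ p - ‖x‖ ^ p) * f y + ‖x‖ ^ p * f y := by
      funext y; ring
    rw [this, integral_add hd (hf.const_mul _), integral_const_mul, hone]
    ring
  have e2 : A * (δ + ∫ y in {y : EuclideanSpace ℝ (Fin n) | δ ≤ ‖y‖}, (1 + ‖y‖ ^ p) * f y) =
      ∫ y, A * (δ * f y + Set.indicator {y : EuclideanSpace ℝ (Fin n) | δ ≤ ‖y‖}
        (fun y => (1 + ‖y‖ ^ p) * f y) y) := by
    rw [integral_const_mul, integral_add (hf.const_mul δ) (hint.indicator hS),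
      integral_const_mul, hone, integral_indicator hS, mul_one]
  rw [e1, e2, ← Real.norm_eq_abs]
  refine norm_integral_le_of_norm_le hg (ae_of_all _ fun y => ?_)
  rw [norm_mul, Real.norm_of_nonneg (hpos y), Real.norm_eq_abs]
  by_cases hy : δ ≤ ‖y‖
  · rw [Set.indicator_of_mem (by exact hy)]
    have h3 := mul_le_mul_of_nonneg_right (aux_far p x y) (hpos y)
    rw [← hA] at h3
    have : 0 ≤ A * (δ * f y) := mul_nonneg hA0 (mul_nonneg hδ.le (hpos y))
    linarith
  · rw [Set.indicator_of_notMem (by exact hy)]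
    have h3 := mul_le_mul_of_nonneg_right (aux_near p x y δ h1 (not_le.1 hy).le) (hpos y)
    rw [← hA] at h3
    linarith

/-- If `(F_k)` are nonnegative measurable functions with total integral `1` whose
mass (weighted by `1+|y|^{2m−n}`) concentrates at the origin, then
`ũ_k(x) = ∫ |x−y|^{2m−n} F_k(y) dy` converges to `|x|^{2m−n}` uniformly on compact
sets, and eventually `C⁻¹|x|^{2m−n} ≤ ũ_k(x) ≤ C|x|^{2m−n}` for `|x| ≥ 1`. -/
theorem stmt8 (n m : ℕ) (hn : 3 ≤ n) (hodd : Odd n) (hmn : n < 2 * m)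
    (F : ℕ → EuclideanSpace ℝ (Fin n) → ℝ)
    (hmeas : ∀ k, Measurable (F k)) (hpos : ∀ k y, 0 ≤ F k y)
    (hint : ∀ k, Integrable (fun y : EuclideanSpace ℝ (Fin n) =>
      (1 + ‖y‖ ^ (2 * m - n)) * F k y))
    (hone : ∀ k, ∫ y : EuclideanSpace ℝ (Fin n), F k y = 1)
    (htail : ∀ δ : ℝ, 0 < δ →
      Tendsto (fun k => ∫ y in {y : EuclideanSpace ℝ (Fin n) | δ ≤ ‖y‖},
        (1 + ‖y‖ ^ (2 * m - n)) * F k y) atTop (𝓝 0)) :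
    (∀ K : Set (EuclideanSpace ℝ (Fin n)), IsCompact K →
      TendstoUniformlyOn (fun k x => ∫ y, ‖x - y‖ ^ (2 * m - n) * F k y)
        (fun x => ‖x‖ ^ (2 * m - n)) atTop K) ∧
    ∃ C : ℝ, 0 < C ∧ ∃ k₀ : ℕ, ∀ k, k₀ ≤ k → ∀ x : EuclideanSpace ℝ (Fin n), 1 ≤ ‖x‖ →
      C⁻¹ * ‖x‖ ^ (2 * m - n) ≤ (∫ y, ‖x - y‖ ^ (2 * m - n) * F k y) ∧
        (∫ y, ‖x - y‖ ^ (2 * m - n) * F k y) ≤ C * ‖x‖ ^ (2 * m - n) := by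
  generalize 2 * m - n = p at *
  have key : ∀ ε : ℝ, 0 < ε → ∀ᶠ k in atTop, ∀ x : EuclideanSpace ℝ (Fin n),
      |(∫ y, ‖x - y‖ ^ p * F k y) - ‖x‖ ^ p| ≤ ε * (1 + ‖x‖ ^ p) := by
    intro ε hε
    have hB : (0:ℝ) < (p + 2) * 2 ^ p := by positivity
    set B : ℝ := (p + 2) * 2 ^ p with hBd
    have hδ : 0 < min 1 (ε / (2 * B)) := lt_min one_pos (by positivity)
    have hη : 0 < ε / (2 * B) := by positivity
    filter_upwards [(htail _ hδ).eventually_lt_const hη] with k hk x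
    refine (aux_est n p (F k) (hmeas k) (hpos k) (hint k) (hone k) _ hδ (min_le_left _ _) x).trans ?_
    rw [← hBd]
    calc _ ≤ B * (1 + ‖x‖ ^ p) * (ε / (2 * B) + ε / (2 * B)) := by
          have := min_le_right 1 (ε / (2 * B))
          gcongr
      _ = _ := by field_simp; ring
  constructor
  · intro K hK
    obtain ⟨R, hR⟩ := hK.isBounded.exists_norm_le
    have hR' : ∀ x ∈ K, ‖x‖ ^ p ≤ |R| ^ p := fun x hx =>
      pow_le_pow_left₀ (norm_nonneg _) ((hR x hx).trans (le_abs_self R)) p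
    rw [Metric.tendstoUniformlyOn_iff]
    intro ε hε
    have hM : 0 < 1 + |R| ^ p := by positivity
    filter_upwards [key (ε / (2 * (1 + |R| ^ p))) (by positivity)] with k hk x hx
    rw [dist_comm, Real.dist_eq]
    calc _ ≤ _ := hk x
      _ ≤ ε / (2 * (1 + |R| ^ p)) * (1 + |R| ^ p) := by
          have := hR' x hx
          gcongr
      _ = ε / 2 := by field_simp
      _ < ε := by linarith
  · obtain ⟨k₀, hk₀⟩ := eventually_atTop.1 (key (1 / 4) (by norm_num))
    refine ⟨2, by norm_num, k₀, fun k hk x hx => ?_⟩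
    have h := abs_le.1 (hk₀ k hk x)
    have h1 : 1 ≤ ‖x‖ ^ p := one_le_pow₀ hx
    constructor <;> linarith [h.1, h.2]
end

section
/- Let 0 < α < (n+2m)/(2m−n), and let u be a positive smooth function on ℝⁿ such that for some c > 0 one has c^{−1}(1+|x|²)^{(2m−n)/2} ≤ u(x) ≤ c(1+|x|²)^{(2m−n)/2} for all x, and u(x) = γ ∫_{ℝⁿ} |x−y|^{2m−n} (2/(1+|y|²))^{(n+2m)/2 + α(n−2m)/2} u(y)^{−α} dy for all x ∈ ℝⁿ. Then u(x) = ((1+|x|²)/2)^{(2m−n)/2} for every x ∈ ℝⁿ. -/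
open MeasureTheory

noncomputable section

set_option linter.unusedSectionVars false

open Set Filter Topology


/-- The divided difference `(a^p - b^p) / (a^2 - b^2)`, written without cancellation. -/
def Qk (p : ℕ) (a b : ℝ) : ℝ := (∑ i ∈ Finset.range p, a ^ i * b ^ (p - 1 - i)) / (a + b)

theorem Qk_comm (p : ℕ) (a b : ℝ) : Qk p a b = Qk p b a := by
  unfold Qk
  rw [add_comm a b, ← Finset.sum_range_reflect]
  congr 1
  apply Finset.sum_congr rfl
  intro i hi
  have : i < p := Finset.mem_range.1 hi
  rw [show p - 1 - (p - 1 - i) = i by omega, mul_comm]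

theorem Qk_mul (p : ℕ) (a b : ℝ) (ha : 0 ≤ a) (hb : 0 ≤ b) :
    Qk p a b * (a ^ 2 - b ^ 2) = a ^ p - b ^ p := by
  unfold Qk
  rcases eq_or_ne (a + b) 0 with h | h
  · have ha0 : a = 0 := by linarith
    have hb0 : b = 0 := by linarith
    subst ha0 hb0
    simp
  · rw [← (Commute.all a b).geom_sum₂_mul p]
    field_simp
    ring

theorem Qk_pos (p : ℕ) (hp : 1 ≤ p) (a b : ℝ) (ha : 0 ≤ a) (hb : 0 ≤ b) (h : 0 < a + b) :
    0 < Qk p a b := by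
  unfold Qk
  apply div_pos _ h
  rcases ha.lt_or_eq with h1 | h1
  · apply Finset.sum_pos' (fun i _ => by positivity)
    refine ⟨p - 1, Finset.mem_range.2 (by omega), ?_⟩
    simp; positivity
  · have hb' : 0 < b := by linarith
    apply Finset.sum_pos' (fun i _ => by positivity)
    refine ⟨0, Finset.mem_range.2 (by omega), ?_⟩
    simp; positivity

theorem Qk_nonneg (p : ℕ) (a b : ℝ) (ha : 0 ≤ a) (hb : 0 ≤ b) :
    0 ≤ Qk p a b := by
  unfold Qk
  positivity

theorem Qk_bound (p : ℕ) (hp : 1 ≤ p) (a b z K : ℝ) (ha : 0 ≤ a) (hb : 0 ≤ b)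
    (hK : 0 ≤ K) (hz : |z| ≤ max a b * K) :
    |Qk p a b * z| ≤ p * (max a b) ^ (p - 1) * K := by
  rw [abs_mul, abs_of_nonneg (Qk_nonneg p a b ha hb)]
  set M := max a b with hM
  have haM : a ≤ M := le_max_left _ _
  have hbM : b ≤ M := le_max_right _ _
  have hM0 : 0 ≤ M := ha.trans haM
  have hS : Qk p a b * M ≤ p * M ^ (p - 1) := by
    have h1 : ∑ i ∈ Finset.range p, a ^ i * b ^ (p - 1 - i) ≤ p * M ^ (p - 1) := by
      calc _ ≤ ∑ i ∈ Finset.range p, M ^ (p - 1) := by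
            apply Finset.sum_le_sum
            intro i hi
            have : i < p := Finset.mem_range.1 hi
            calc a ^ i * b ^ (p - 1 - i) ≤ M ^ i * M ^ (p - 1 - i) := by gcongr
              _ = M ^ (p - 1) := by rw [← pow_add]; congr 1; omega
        _ = _ := by simp
    have h2 : M ≤ a + b := max_le (by linarith) (by linarith)
    have h0 : 0 ≤ ∑ i ∈ Finset.range p, a ^ i * b ^ (p - 1 - i) := by positivity
    unfold Qk
    rw [div_mul_eq_mul_div]
    apply div_le_of_le_mul₀ (by positivity) (by positivity)
    gcongr
  calc Qk p a b * |z| ≤ Qk p a b * (M * K) := by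
        gcongr
        exact Qk_nonneg p a b ha hb
    _ = (Qk p a b * M) * K := by ring
    _ ≤ _ := by gcongr

theorem Qk_continuousAt (p : ℕ) (q : ℝ × ℝ) (h : q.1 + q.2 ≠ 0) :
    ContinuousAt (fun q : ℝ × ℝ => Qk p q.1 q.2) q := by
  unfold Qk
  have h1 : ContinuousAt (fun q : ℝ × ℝ => ∑ i ∈ Finset.range p, q.1 ^ i * q.2 ^ (p - 1 - i)) q := by
    fun_prop
  have h2 : ContinuousAt (fun q : ℝ × ℝ => q.1 + q.2) q := by fun_prop
  exact h1.div h2 h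

theorem Qk_measurable (p : ℕ) : Measurable (fun q : ℝ × ℝ => Qk p q.1 q.2) := by
  unfold Qk
  fun_prop

variable {E : Type*} [NormedAddCommGroup E] [InnerProductSpace ℝ E]

/-- reflection in the hyperplane `⟪x, e⟫ = τ` -/
def rf (e : E) (τ : ℝ) (x : E) : E := x + (2 * (τ - inner ℝ x e)) • e

theorem rf_inner (e : E) (he : ‖e‖ = 1) (τ : ℝ) (x : E) :
    inner ℝ (rf e τ x) e = 2 * τ - inner ℝ x e := by
  simp [rf, inner_add_left, inner_smul_left, he]; ring

theorem rf_rf (e : E) (he : ‖e‖ = 1) (τ : ℝ) (x : E) : rf e τ (rf e τ x) = x := by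
  conv_lhs => rw [rf, rf_inner e he]
  rw [rf, add_assoc, ← add_smul]
  ring_nf
  simp

theorem rf_norm_sub (e : E) (he : ‖e‖ = 1) (τ : ℝ) (x y : E) :
    ‖rf e τ x - y‖ ^ 2 - ‖x - y‖ ^ 2 = 4 * (τ - inner ℝ x e) * (τ - inner ℝ y e) := by
  have : rf e τ x - y = (x - y) + (2 * (τ - inner ℝ x e)) • e := by rw [rf]; abel
  rw [this, norm_add_sq_real, norm_smul, he, inner_smul_right, inner_sub_left, mul_one,
    Real.norm_eq_abs, sq_abs]
  ring

theorem rf_norm_sub' (e : E) (he : ‖e‖ = 1) (τ : ℝ) (x y : E) :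
    ‖rf e τ x - rf e τ y‖ = ‖x - y‖ := by
  have h1 := rf_norm_sub e he τ x (rf e τ y)
  have h2 := rf_norm_sub e he τ y x
  rw [rf_inner e he, norm_sub_rev (rf e τ y), norm_sub_rev y] at *
  have : ‖rf e τ x - rf e τ y‖ ^ 2 = ‖x - y‖ ^ 2 := by linarith
  exact (pow_left_inj₀ (norm_nonneg _) (norm_nonneg _) two_ne_zero).1 this

theorem rf_norm_sub_comm (e : E) (he : ‖e‖ = 1) (τ : ℝ) (x y : E) :
    ‖rf e τ x - y‖ = ‖x - rf e τ y‖ := by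
  rw [← rf_norm_sub' e he τ x, rf_rf e he]

theorem rf_norm (e : E) (he : ‖e‖ = 1) (τ : ℝ) (x : E) :
    ‖rf e τ x‖ ^ 2 - ‖x‖ ^ 2 = 4 * τ * (τ - inner ℝ x e) := by
  have := rf_norm_sub e he τ x 0
  simp at this
  linarith

theorem rf_smul (e : E) (c τ : ℝ) (x : E) : c • rf e τ x = rf e (c * τ) (c • x) := by
  simp only [rf, smul_add, smul_smul, inner_smul_left]
  congr 2
  simp; ring

theorem rf_measurePreserving [FiniteDimensional ℝ E] [MeasurableSpace E] [BorelSpace E]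
    (e : E) (he : ‖e‖ = 1) (τ : ℝ) :
    MeasurePreserving (rf e τ) := by
  have hiso : Isometry (rf e τ) := by
    apply Isometry.of_dist_eq
    intro x y
    rw [dist_eq_norm, dist_eq_norm, rf_norm_sub' e he]
  have hlin : ∀ x, rf e τ x = (Submodule.reflection (ℝ ∙ e)ᗮ x) + (2 * τ) • e := by
    intro x
    rw [Submodule.reflection_orthogonal_apply, Submodule.reflection_singleton_apply, he, rf, real_inner_comm]
    simp only [mul_sub, sub_smul, smul_smul, ← Nat.cast_smul_eq_nsmul ℝ]
    norm_num
    abel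
  have : rf e τ = (fun z => z + (2 * τ) • e) ∘ (Submodule.reflection (ℝ ∙ e)ᗮ) := by
    ext1 x; exact hlin x
  rw [this]
  exact (measurePreserving_add_right volume _).comp (LinearIsometryEquiv.measurePreserving _)

end

noncomputable section

set_option linter.unusedSectionVars false

open Set Filter Topology


variable {E : Type*} [NormedAddCommGroup E] [InnerProductSpace ℝ E]

/-- the integrand of the moving plane functional -/
def Gi (p : ℕ) (e : E) (f : E → ℝ) (k : (E × ℝ) × ℝ) (y : E) : ℝ :=
  Qk p ‖rf e k.1.2 k.1.1 - (k.2 * k.1.2) • y‖ ‖k.1.1 - (k.2 * k.1.2) • y‖ *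
    (1 - k.2 * inner ℝ y e) * f y

/-- compact parameter set -/
def Kset (e : E) : Set (E × ℝ) := {k | ‖k.1‖ + k.2 = 1 ∧ 0 ≤ k.2 ∧ inner ℝ k.1 e ≤ k.2}

theorem Kset_compact [FiniteDimensional ℝ E] (e : E) : IsCompact (Kset e) := by
  apply Metric.isCompact_of_isClosed_isBounded
  · have h1 : IsClosed {k : E × ℝ | ‖k.1‖ + k.2 = 1} :=
      isClosed_eq (by fun_prop) (by fun_prop)
    have h2 : IsClosed {k : E × ℝ | 0 ≤ k.2} :=
      isClosed_le (by fun_prop) (by fun_prop)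
    have h3 : IsClosed {k : E × ℝ | inner ℝ k.1 e ≤ k.2} :=
      isClosed_le (by fun_prop) (by fun_prop)
    exact h1.inter (h2.inter h3)
  · rw [isBounded_iff_forall_norm_le]
    refine ⟨1, ?_⟩
    rintro ⟨x, t⟩ ⟨h1, h2, h3⟩
    simp only at h1 h2 h3
    rw [Prod.norm_def]
    apply max_le
    · simp only; linarith
    · simp only
      rw [Real.norm_eq_abs, abs_of_nonneg h2]
      linarith [norm_nonneg x]

theorem Gi_zero_case (e : E) (he : ‖e‖ = 1) (ξ : E) (τ t : ℝ) (hk : (ξ, τ) ∈ Kset e) (y : E)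
    (hy : y ≠ (t * τ)⁻¹ • ξ) :
    0 < ‖rf e τ ξ - (t * τ) • y‖ + ‖ξ - (t * τ) • y‖ := by
  obtain ⟨h1, h2, h3⟩ := hk
  simp only at h1 h2 h3
  by_contra hcon
  have hA : ‖rf e τ ξ - (t * τ) • y‖ = 0 := by
    linarith [norm_nonneg (rf e τ ξ - (t * τ) • y), norm_nonneg (ξ - (t * τ) • y)]
  have hB : ‖ξ - (t * τ) • y‖ = 0 := by
    linarith [norm_nonneg (rf e τ ξ - (t * τ) • y), norm_nonneg (ξ - (t * τ) • y)]
  rw [norm_eq_zero, sub_eq_zero] at hA hB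
  by_cases h0 : t * τ = 0
  · rw [h0, zero_smul] at hA hB
    have := rf_norm e he τ ξ
    rw [hA, hB] at this
    simp at this
    rw [hB, norm_zero] at h1
    have hτ : τ = 1 := by linarith
    subst hτ
    norm_num at this
  · apply hy
    rw [hB, smul_smul, inv_mul_cancel₀ h0, one_smul]

theorem Gi_bound (p : ℕ) (hp : 1 ≤ p) (e : E) (he : ‖e‖ = 1) (f : E → ℝ) (T : ℝ)
    (ξ : E) (τ t : ℝ) (hk : (ξ, τ) ∈ Kset e) (ht : 0 ≤ t) (htT : t ≤ T) (y : E)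
    (hfy : 0 < f y) :
    ‖Gi p e f ((ξ, τ), t) y‖ ≤ p * (3 + T) ^ (p - 1) * (2 + 2 * T) * ((1 + ‖y‖) ^ p * f y) := by
  obtain ⟨h1, h2, h3⟩ := hk
  simp only at h1 h2 h3
  unfold Gi
  simp only
  set a := ‖rf e τ ξ - (t * τ) • y‖ with ha
  set b := ‖ξ - (t * τ) • y‖ with hb
  set M := max a b with hM
  have ha0 : 0 ≤ a := norm_nonneg _
  have hb0 : 0 ≤ b := norm_nonneg _
  have haM : a ≤ M := le_max_left _ _
  have hbM : b ≤ M := le_max_right _ _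
  have hξ0 := norm_nonneg ξ
  have hy0 := norm_nonneg y
  have hT : 0 ≤ T := ht.trans htT
  have hτ1 : τ ≤ 1 := by linarith
  have hye : |inner ℝ y e| ≤ ‖y‖ := by
    have := abs_real_inner_le_norm y e
    rwa [he, mul_one] at this
  have hξe : |inner ℝ ξ e| ≤ ‖ξ‖ := by
    have := abs_real_inner_le_norm ξ e
    rwa [he, mul_one] at this
  have hty : ‖(t * τ) • y‖ = t * τ * ‖y‖ := by
    rw [norm_smul, Real.norm_eq_abs, abs_of_nonneg (by positivity)]
  have htτ : t * τ * ‖y‖ ≤ t * ‖y‖ := by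
    have : t * τ ≤ t := by nlinarith
    gcongr
  have htTy : t * ‖y‖ ≤ T * ‖y‖ := by gcongr
  have hMle : M ≤ (3 + T) * (1 + ‖y‖) := by
    have hrf : ‖rf e τ ξ‖ ≤ 3 := by
      unfold rf
      refine (norm_add_le _ _).trans ?_
      rw [norm_smul, he, Real.norm_eq_abs, abs_mul]
      have := abs_sub τ (inner ℝ ξ e)
      rw [abs_of_nonneg h2] at this
      norm_num
      linarith
    have h4 : a ≤ 3 + T * ‖y‖ := by
      refine (norm_sub_le _ _).trans ?_
      rw [hty]; linarith
    have h5 : b ≤ 3 + T * ‖y‖ := by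
      refine (norm_sub_le _ _).trans ?_
      rw [hty]; linarith
    have : M ≤ 3 + T * ‖y‖ := max_le h4 h5
    nlinarith
  have hM1 : ‖ξ‖ ≤ M + t * τ * ‖y‖ := by
    have : ‖ξ‖ ≤ b + ‖(t * τ) • y‖ := by
      have := norm_add_le (ξ - (t * τ) • y) ((t * τ) • y)
      simpa using this
    rw [hty] at this
    linarith
  have hM2 : τ * |1 - t * inner ℝ y e| ≤ M := by
    have habs : |τ * (1 - t * inner ℝ y e)| = τ * |1 - t * inner ℝ y e| := by
      rw [abs_mul, abs_of_nonneg h2]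
    rw [← habs]
    apply abs_le.2 ⟨?_, ?_⟩
    · have : inner ℝ ((t * τ) • y - ξ) e ≤ b := by
        refine (real_inner_le_norm _ _).trans ?_
        rw [he, mul_one, norm_sub_rev]
      rw [inner_sub_left, inner_smul_left] at this
      simp at this
      nlinarith
    · have : inner ℝ (rf e τ ξ - (t * τ) • y) e ≤ a := by
        refine (real_inner_le_norm _ _).trans ?_
        rw [he, mul_one]
      rw [inner_sub_left, inner_smul_left, rf_inner e he] at this
      simp at this
      nlinarith
  have hM0 : 0 ≤ M := ha0.trans haM
  have hz1 : |1 - t * inner ℝ y e| ≤ 1 + t * ‖y‖ := by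
    refine (abs_sub _ _).trans ?_
    rw [abs_mul, abs_one, abs_of_nonneg ht]
    gcongr
  have hz : |1 - t * inner ℝ y e| ≤ M * ((2 + 2 * T) * (1 + ‖y‖)) := by
    set z := |1 - t * inner ℝ y e| with hzd
    have hz0 : 0 ≤ z := abs_nonneg _
    calc z = z * ‖ξ‖ + τ * z := by rw [← mul_one z]; nth_rewrite 1 [← h1]; ring
      _ ≤ z * (M + t * τ * ‖y‖) + M := by gcongr
      _ = M * (z + 1) + t * ‖y‖ * (τ * z) := by ring
      _ ≤ M * (z + 1) + t * ‖y‖ * M := by gcongr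
      _ = M * (z + 1 + t * ‖y‖) := by ring
      _ ≤ _ := by
        gcongr
        nlinarith
  have := Qk_bound p hp a b _ _ ha0 hb0 (by positivity) hz
  rw [norm_mul, Real.norm_eq_abs, Real.norm_eq_abs, abs_of_pos hfy]
  calc _ ≤ (p * M ^ (p - 1) * ((2 + 2 * T) * (1 + ‖y‖))) * f y := by gcongr
    _ ≤ (p * ((3 + T) * (1 + ‖y‖)) ^ (p - 1) * ((2 + 2 * T) * (1 + ‖y‖))) * f y := by gcongr
    _ = _ := by
      obtain ⟨q, rfl⟩ : ∃ q, p = q + 1 := ⟨p - 1, by omega⟩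
      simp only [Nat.add_sub_cancel, mul_pow]
      ring

variable [FiniteDimensional ℝ E] [MeasurableSpace E] [BorelSpace E]

/-- the moving plane functional -/
def Fi (p : ℕ) (e : E) (f : E → ℝ) (k : (E × ℝ) × ℝ) : ℝ := ∫ y, Gi p e f k y

theorem Gi_meas (p : ℕ) (e : E) (f : E → ℝ) (hf : AEStronglyMeasurable f volume)
    (k : (E × ℝ) × ℝ) : AEStronglyMeasurable (Gi p e f k) volume := by
  unfold Gi
  apply AEStronglyMeasurable.mul _ hf
  have h1 : Measurable (fun y : E => (‖rf e k.1.2 k.1.1 - (k.2 * k.1.2) • y‖,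
      ‖k.1.1 - (k.2 * k.1.2) • y‖)) := by fun_prop
  have h2 : Measurable (fun y : E => 1 - k.2 * inner ℝ y e) := by fun_prop
  exact (((Qk_measurable p).comp h1).mul h2).aestronglyMeasurable

theorem Gi_integrable (p : ℕ) (hp : 1 ≤ p) (e : E) (he : ‖e‖ = 1) (f : E → ℝ)
    (hf : AEStronglyMeasurable f volume) (hpos : ∀ᵐ y, 0 < f y)
    (hint : Integrable (fun y => (1 + ‖y‖) ^ p * f y))
    (ξ : E) (τ t : ℝ) (hk : (ξ, τ) ∈ Kset e) (ht : 0 ≤ t) :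
    Integrable (Gi p e f ((ξ, τ), t)) := by
  apply Integrable.mono' (hint.const_mul (p * (3 + t) ^ (p - 1) * (2 + 2 * t))) (Gi_meas p e f hf _)
  filter_upwards [hpos] with y hy
  exact Gi_bound p hp e he f t ξ τ t hk ht le_rfl y hy

theorem Fi_cont [Nontrivial E] (p : ℕ) (hp : 1 ≤ p) (e : E) (he : ‖e‖ = 1) (f : E → ℝ)
    (hf : AEStronglyMeasurable f volume) (hpos : ∀ᵐ y, 0 < f y)
    (hint : Integrable (fun y => (1 + ‖y‖) ^ p * f y)) (T : ℝ) :
    ContinuousOn (Fi p e f) (Kset e ×ˢ Icc 0 T) := by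
  rintro ⟨⟨ξ, τ⟩, t⟩ ⟨hk, ht⟩
  unfold Fi
  apply continuousWithinAt_of_dominated
    (bound := fun y => p * (3 + T) ^ (p - 1) * (2 + 2 * T) * ((1 + ‖y‖) ^ p * f y))
  · exact Eventually.of_forall fun k => Gi_meas p e f hf k
  · filter_upwards [self_mem_nhdsWithin] with k hk
    obtain ⟨⟨ξ, τ⟩, t⟩ := k
    obtain ⟨hk, ht⟩ := hk
    filter_upwards [hpos] with y hy
    exact Gi_bound p hp e he f T ξ τ t hk ht.1 ht.2 y hy
  · exact hint.const_mul _
  · have hne : ∀ᵐ y : E, y ≠ (t * τ)⁻¹ • ξ := by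
      exact (Set.finite_singleton _).measure_zero volume |> compl_mem_ae_iff.2
    filter_upwards [hne] with y hy
    apply ContinuousAt.continuousWithinAt
    have h0 := Gi_zero_case e he ξ τ t hk y hy
    unfold Gi rf
    have hc : ContinuousAt (fun k : (E × ℝ) × ℝ =>
      (‖k.1.1 + (2 * (k.1.2 - inner ℝ k.1.1 e)) • e - (k.2 * k.1.2) • y‖,
        ‖k.1.1 - (k.2 * k.1.2) • y‖)) ((ξ, τ), t) := by fun_prop
    have hQ := ContinuousAt.comp_of_eq (Qk_continuousAt p (‖rf e τ ξ - (t * τ) • y‖,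
      ‖ξ - (t * τ) • y‖) h0.ne') hc rfl
    have h2 : ContinuousAt (fun k : (E × ℝ) × ℝ => 1 - k.2 * inner ℝ y e) ((ξ, τ), t) := by
      fun_prop
    exact (hQ.mul h2).mul continuousAt_const

end

noncomputable section

set_option linter.unusedSectionVars false

open Set Filter Topology



variable {E : Type*} [NormedAddCommGroup E] [InnerProductSpace ℝ E]
variable [FiniteDimensional ℝ E] [MeasurableSpace E] [BorelSpace E]

theorem posint (g : E → ℝ) (hg : Integrable g) (hpos : ∀ᵐ y, 0 < g y) : 0 < ∫ y, g y := by
  have h0 : 0 ≤ᵐ[volume] g := by filter_upwards [hpos] with y hy using hy.le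
  rcases (integral_nonneg_of_ae h0).lt_or_eq with h | h
  · exact h
  · exfalso
    have h1 := (integral_eq_zero_iff_of_nonneg_ae h0 hg).1 h.symm
    have h2 : ∀ᵐ y : E, False := by
      filter_upwards [hpos, h1] with y hy h1
      simp at h1
      linarith
    simp at h2
    exact NeZero.ne (volume : Measure E) h2

theorem ae_ne_pt [Nontrivial E] (a : E) : ∀ᵐ y : E, y ≠ a :=
  compl_mem_ae_iff.2 ((Set.finite_singleton a).measure_zero volume)

theorem ae_ne_plane (e : E) (he : ‖e‖ = 1) (l : ℝ) : ∀ᵐ y : E, inner ℝ y e ≠ l := by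
  let S : AffineSubspace ℝ E := AffineSubspace.mk' (l • e) (ℝ ∙ e)ᗮ
  have hmem : ∀ y, y ∈ S ↔ inner ℝ y e = l := by
    intro y
    rw [AffineSubspace.mem_mk', Submodule.mem_orthogonal_singleton_iff_inner_left]
    simp [inner_sub_left, inner_smul_left, he, sub_eq_zero]
  have hS : S ≠ ⊤ := by
    intro h
    have : (l + 1) • e ∈ S := by rw [h]; trivial
    rw [hmem] at this
    simp [inner_smul_left, he] at this
  have := Measure.addHaar_affineSubspace (volume : Measure E) S hS
  have h2 := compl_mem_ae_iff.2 this
  filter_upwards [h2] with y hy h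
  exact hy ((hmem y).2 h)

theorem kern_int (p : ℕ) (f : E → ℝ)
    (hf : AEStronglyMeasurable f volume) (hpos : ∀ᵐ y, 0 < f y)
    (hint : Integrable (fun y => (1 + ‖y‖) ^ p * f y)) (x : E) :
    Integrable (fun y => ‖x - y‖ ^ p * f y) := by
  apply Integrable.mono' (hint.const_mul ((1 + ‖x‖) ^ p))
  · exact (Continuous.aestronglyMeasurable (by fun_prop)).mul hf
  · filter_upwards [hpos] with y hy
    rw [norm_mul, Real.norm_eq_abs, Real.norm_eq_abs, abs_of_pos hy, abs_of_nonneg (by positivity),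
      ← mul_assoc, ← mul_pow]
    have : ‖x - y‖ ≤ (1 + ‖x‖) * (1 + ‖y‖) := by
      refine (norm_sub_le _ _).trans ?_
      nlinarith [norm_nonneg x, norm_nonneg y]
    gcongr

theorem u_cont (p : ℕ) (f : E → ℝ)
    (hf : AEStronglyMeasurable f volume) (hpos : ∀ᵐ y, 0 < f y)
    (hint : Integrable (fun y => (1 + ‖y‖) ^ p * f y)) :
    Continuous (fun x => ∫ y, ‖x - y‖ ^ p * f y) := by
  rw [continuous_iff_continuousAt]
  intro x₀
  apply continuousAt_of_dominated (bound := fun y => (2 + ‖x₀‖) ^ p * ((1 + ‖y‖) ^ p * f y))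
  · exact Eventually.of_forall fun x => (kern_int p f hf hpos hint x).1
  · filter_upwards [Metric.ball_mem_nhds x₀ one_pos] with x hx
    filter_upwards [hpos] with y hy
    rw [norm_mul, Real.norm_eq_abs, Real.norm_eq_abs, abs_of_pos hy, abs_of_nonneg (by positivity),
      ← mul_assoc, ← mul_pow]
    have hx' : ‖x‖ ≤ 1 + ‖x₀‖ := by
      have h1 : ‖x - x₀‖ < 1 := by rwa [← dist_eq_norm]
      have := norm_add_le (x - x₀) x₀
      simp at this
      linarith
    have : ‖x - y‖ ≤ (2 + ‖x₀‖) * (1 + ‖y‖) := by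
      refine (norm_sub_le _ _).trans ?_
      nlinarith [norm_nonneg x₀, norm_nonneg y]
    gcongr
  · exact hint.const_mul _
  · exact Eventually.of_forall fun y => by fun_prop

theorem Kset_mem (e : E) (l : ℝ) (hl : 0 < l) (x : E) (hx : inner ℝ x e ≤ l) :
    ((l + ‖x‖)⁻¹ • x, (l + ‖x‖)⁻¹ * l) ∈ Kset e := by
  have hR : 0 < l + ‖x‖ := by positivity
  refine ⟨?_, ?_, ?_⟩
  · simp only
    rw [norm_smul, Real.norm_eq_abs, abs_of_pos (by positivity)]
    field_simp
    ring
  · simp only; positivity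
  · simp only
    rw [inner_smul_left]
    simp
    gcongr

theorem u_diff (p : ℕ) (e : E) (he : ‖e‖ = 1) (f u : E → ℝ) (γ : ℝ)
    (hf : AEStronglyMeasurable f volume) (hpos : ∀ᵐ y, 0 < f y)
    (hint : Integrable (fun y => (1 + ‖y‖) ^ p * f y))
    (hu : ∀ x, u x = γ * ∫ y, ‖x - y‖ ^ p * f y)
    (l : ℝ) (hl : 0 < l) (x : E) :
    u (rf e l x) - u x = γ * (4 * (l + ‖x‖) ^ p * ((l + ‖x‖)⁻¹ * (l - inner ℝ x e)) *
      ((l + ‖x‖)⁻¹ * l)) * Fi p e f (((l + ‖x‖)⁻¹ • x, (l + ‖x‖)⁻¹ * l), l⁻¹) := by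
  have hR : 0 < l + ‖x‖ := by positivity
  rw [hu, hu, ← mul_sub, ← integral_sub (kern_int p f hf hpos hint _) (kern_int p f hf hpos hint _),
    mul_assoc, Fi]
  congr 1
  rw [← integral_const_mul]
  apply integral_congr_ae
  apply Eventually.of_forall
  intro y
  simp only
  unfold Gi
  simp only
  set R := l + ‖x‖ with hRd
  have h1 : l⁻¹ * (R⁻¹ * l) = R⁻¹ := by field_simp
  rw [h1, ← rf_smul, ← smul_sub, ← smul_sub, norm_smul, norm_smul, Real.norm_eq_abs,
    abs_of_pos (by positivity)]
  set a := ‖rf e l x - y‖ with ha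
  set b := ‖x - y‖ with hb
  have h2 := Qk_mul p (R⁻¹ * a) (R⁻¹ * b) (by positivity) (by positivity)
  have h3 := rf_norm_sub e he l x y
  rw [← ha, ← hb] at h3
  have h4 : a ^ p - b ^ p = R ^ p * ((R⁻¹ * a) ^ p - (R⁻¹ * b) ^ p) := by
    rw [mul_pow, mul_pow, inv_pow]
    field_simp
  have h5 : (R⁻¹ * a) ^ 2 - (R⁻¹ * b) ^ 2 =
      R⁻¹ * R⁻¹ * (4 * (l - inner ℝ x e) * (l - inner ℝ y e)) := by
    rw [← h3]; ring
  have h6 : l - inner ℝ y e = l * (1 - l⁻¹ * inner ℝ y e) := by field_simp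
  rw [← sub_mul, h4, ← h2, h5, h6]
  ring

theorem u_pos [Nontrivial E] (p : ℕ) (f u : E → ℝ) (γ : ℝ) (hγ : 0 < γ)
    (hf : AEStronglyMeasurable f volume) (hpos : ∀ᵐ y, 0 < f y)
    (hint : Integrable (fun y => (1 + ‖y‖) ^ p * f y))
    (hu : ∀ x, u x = γ * ∫ y, ‖x - y‖ ^ p * f y) (x : E) : 0 < u x := by
  rw [hu]
  apply mul_pos hγ
  apply posint _ (kern_int p f hf hpos hint x)
  filter_upwards [hpos, ae_ne_pt x] with y hy hyx
  have : 0 < ‖x - y‖ := norm_pos_iff.2 (sub_ne_zero.2 hyx.symm)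
  positivity



theorem f_lt (e : E) (he : ‖e‖ = 1) (f u : E → ℝ) (σ α : ℝ) (hσ : 0 < σ) (hα : 0 < α)
    (hup : ∀ x, 0 < u x) (l : ℝ) (hl : 0 < l) (y : E) (hy : inner ℝ y e < l)
    (h1 : f y = (2 / (1 + ‖y‖ ^ 2)) ^ σ * u y ^ (-α))
    (h2 : f (rf e l y) = (2 / (1 + ‖rf e l y‖ ^ 2)) ^ σ * u (rf e l y) ^ (-α))
    (hle : u y ≤ u (rf e l y)) : f (rf e l y) < f y := by
  rw [h1, h2]
  have h3 := rf_norm e he l y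
  have h4 : ‖y‖ ^ 2 < ‖rf e l y‖ ^ 2 := by
    have : 0 < 4 * l * (l - inner ℝ y e) := by
      have : 0 < l - inner ℝ y e := by linarith
      positivity
    linarith
  apply mul_lt_mul
  · apply Real.rpow_lt_rpow (by positivity) _ hσ
    gcongr
  · exact Real.rpow_le_rpow_of_nonpos (hup y) hle (by linarith)
  · exact Real.rpow_pos_of_pos (hup _) _
  · positivity

theorem Fi_strict [Nontrivial E] (p : ℕ) (hp : 1 ≤ p) (e : E) (he : ‖e‖ = 1) (f u : E → ℝ) (γ : ℝ)
    (hγ : 0 < γ) (σ α : ℝ) (hσ : 0 < σ) (hα : 0 < α)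
    (hf : AEStronglyMeasurable f volume) (hpos : ∀ᵐ y, 0 < f y)
    (hint : Integrable (fun y => (1 + ‖y‖) ^ p * f y))
    (hu : ∀ x, u x = γ * ∫ y, ‖x - y‖ ^ p * f y)
    (hfu : ∀ᵐ y, f y = (2 / (1 + ‖y‖ ^ 2)) ^ σ * u y ^ (-α))
    (t : ℝ) (ht : 0 ≤ t) (hP : ∀ k ∈ Kset e, 0 ≤ Fi p e f (k, t)) :
    ∀ k ∈ Kset e, 0 < Fi p e f (k, t) := by
  rintro ⟨ξ, τ⟩ hk
  have hGi := Gi_integrable p hp e he f hf hpos hint ξ τ t hk ht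
  rcases ht.lt_or_eq with ht0 | ht0
  · have hup := u_pos p f u γ hγ hf hpos hint hu
    set l := t⁻¹ with hl
    have hl0 : 0 < l := by positivity
    have htl : t = l⁻¹ := by simp [hl]
    have hmono : ∀ x : E, inner ℝ x e ≤ l → u x ≤ u (rf e l x) := by
      intro x hx
      have h1 := u_diff p e he f u γ hf hpos hint hu l hl0 x
      have h2 := hP _ (Kset_mem e l hl0 x hx)
      rw [htl] at h2
      have h3 : 0 ≤ l - inner ℝ x e := by linarith
      have : 0 ≤ u (rf e l x) - u x := by rw [h1]; positivity
      linarith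
    have hmp := rf_measurePreserving e he l
    have hme : MeasurableEmbedding (rf e l) := by
      have hm : Measurable (rf e l) := hmp.measurable
      exact (MeasurableEquiv.mk ⟨rf e l, rf e l, rf_rf e he l, rf_rf e he l⟩ hm hm).measurableEmbedding
    have hint2 : Integrable (fun y => Gi p e f ((ξ, τ), t) (rf e l y)) :=
      hmp.integrable_comp_of_integrable hGi
    have heq : ∫ y, Gi p e f ((ξ, τ), t) (rf e l y) = Fi p e f ((ξ, τ), t) :=
      hmp.integral_comp hme _
    have hsum : 0 < ∫ y, (Gi p e f ((ξ, τ), t) y + Gi p e f ((ξ, τ), t) (rf e l y)) := by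
      apply posint _ (hGi.add hint2)
      filter_upwards [hfu, hmp.quasiMeasurePreserving.ae hfu, ae_ne_pt ((t * τ)⁻¹ • ξ),
        ae_ne_plane e he l] with y h1 h2 h3 h4
      have hQ := Qk_pos p hp _ _ (norm_nonneg _) (norm_nonneg _) (Gi_zero_case e he ξ τ t hk y h3)
      have e1 : (t * τ) • rf e l y = rf e τ ((t * τ) • y) := by
        rw [rf_smul]; congr 1; rw [htl]; field_simp
      have hG : Gi p e f ((ξ, τ), t) y + Gi p e f ((ξ, τ), t) (rf e l y) =
          Qk p ‖rf e τ ξ - (t * τ) • y‖ ‖ξ - (t * τ) • y‖ *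
            ((1 - t * inner ℝ y e) * (f y - f (rf e l y))) := by
        unfold Gi
        simp only
        rw [e1, rf_norm_sub' e he, ← rf_norm_sub_comm e he, rf_inner e he, Qk_comm p ‖ξ - _‖]
        have : 1 - t * (2 * l - inner ℝ y e) = -(1 - t * inner ℝ y e) := by
          rw [htl]; field_simp; ring
        rw [this]; ring
      change 0 < Gi p e f ((ξ, τ), t) y + Gi p e f ((ξ, τ), t) (rf e l y)
      rw [hG]
      apply mul_pos hQ
      have e2 : 1 - t * inner ℝ y e = t * (l - inner ℝ y e) := by rw [htl]; field_simp
      rcases lt_or_gt_of_ne h4 with h | h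
      · have := f_lt e he f u σ α hσ hα hup l hl0 y h h1 h2 (hmono y h.le)
        rw [e2]
        have h5 : 0 < l - inner ℝ y e := by linarith
        have h6 : 0 < f y - f (rf e l y) := by linarith
        positivity
      · have h' : inner ℝ (rf e l y) e < l := by rw [rf_inner e he]; linarith
        have := f_lt e he f u σ α hσ hα hup l hl0 (rf e l y) h' h2 (by rw [rf_rf e he]; exact h1)
          (hmono _ h'.le)
        rw [rf_rf e he] at this
        rw [e2, mul_assoc]
        apply mul_pos ht0
        apply mul_pos_of_neg_of_neg <;> linarith
    rw [integral_add hGi hint2, heq] at hsum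
    change 0 < Fi p e f ((ξ, τ), t) + _ at hsum
    linarith
  · subst ht0
    apply posint _ hGi
    filter_upwards [hpos, ae_ne_pt (((0 : ℝ) * τ)⁻¹ • ξ)] with y hy h3
    have hQ := Qk_pos p hp _ _ (norm_nonneg _) (norm_nonneg _) (Gi_zero_case e he ξ τ 0 hk y h3)
    unfold Gi
    simp only
    rw [zero_mul (inner ℝ y e), sub_zero, mul_one]
    exact mul_pos hQ hy

theorem Fi_all [Nontrivial E] (p : ℕ) (hp : 1 ≤ p) (e : E) (he : ‖e‖ = 1) (f u : E → ℝ) (γ : ℝ)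
    (hγ : 0 < γ) (σ α : ℝ) (hσ : 0 < σ) (hα : 0 < α)
    (hf : AEStronglyMeasurable f volume) (hpos : ∀ᵐ y, 0 < f y)
    (hint : Integrable (fun y => (1 + ‖y‖) ^ p * f y))
    (hu : ∀ x, u x = γ * ∫ y, ‖x - y‖ ^ p * f y)
    (hfu : ∀ᵐ y, f y = (2 / (1 + ‖y‖ ^ 2)) ^ σ * u y ^ (-α))
    (t : ℝ) (ht : 0 ≤ t) : ∀ k ∈ Kset e, 0 ≤ Fi p e f (k, t) := by
  have hc := Fi_cont p hp e he f hf hpos hint t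
  let s : Set ℝ := {t | ∀ k ∈ Kset e, 0 ≤ Fi p e f (k, t)}
  have hs : IsClosed (s ∩ Icc 0 t) := by
    have : s ∩ Icc 0 t = Icc 0 t ∩ ⋂ k ∈ Kset e, (Icc 0 t ∩ {t | 0 ≤ Fi p e f (k, t)}) := by
      ext z
      simp only [s, mem_inter_iff, mem_ofPred_eq, mem_iInter]
      constructor
      · rintro ⟨h1, h2⟩
        exact ⟨h2, fun k hk => ⟨h2, h1 k hk⟩⟩
      · rintro ⟨h1, h2⟩
        exact ⟨fun k hk => (h2 k hk).2, h1⟩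
    rw [this]
    apply isClosed_Icc.inter
    apply isClosed_biInter
    intro k hk
    have h1 : ContinuousOn (fun t => Fi p e f (k, t)) (Icc 0 t) :=
      hc.comp (by fun_prop) (fun z hz => ⟨hk, hz⟩)
    exact h1.preimage_isClosed_of_isClosed isClosed_Icc isClosed_Ici
  have h0 : (0 : ℝ) ∈ s := by
    rintro ⟨ξ, τ⟩ hk
    apply integral_nonneg_of_ae
    filter_upwards [hpos] with y hy
    unfold Gi
    simp only [zero_mul, sub_zero, mul_one]
    exact mul_nonneg (Qk_nonneg _ _ _ (norm_nonneg _) (norm_nonneg _)) hy.le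
  have hgt : ∀ x ∈ s ∩ Ico 0 t, ∀ y ∈ Ioi x, (s ∩ Ioc x y).Nonempty := by
    rintro x ⟨hxs, hx⟩ y hy
    have hstr := Fi_strict p hp e he f u γ hγ σ α hσ hα hf hpos hint hu hfu x hx.1 hxs
    have hcl : IsClosed ((Kset e ×ˢ Icc 0 t) ∩ Fi p e f ⁻¹' (Iic 0)) :=
      hc.preimage_isClosed_of_isClosed ((Kset_compact e).isClosed.prod isClosed_Icc) isClosed_Iic
    have hcomp : IsCompact ((Kset e ×ˢ Icc 0 t) ∩ Fi p e f ⁻¹' (Iic 0)) :=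
      ((Kset_compact e).prod isCompact_Icc).of_isClosed_subset hcl inter_subset_left
    have hC : IsClosed (Prod.snd '' ((Kset e ×ˢ Icc 0 t) ∩ Fi p e f ⁻¹' (Iic 0))) :=
      (hcomp.image continuous_snd).isClosed
    have hx' : x ∈ (Prod.snd '' ((Kset e ×ˢ Icc 0 t) ∩ Fi p e f ⁻¹' (Iic 0)))ᶜ := by
      rintro ⟨⟨k, x'⟩, ⟨⟨hk, _⟩, h2⟩, rfl⟩
      have := hstr k hk
      simp only [mem_preimage, mem_Iic] at h2
      linarith
    have h1 : ∀ᶠ z in 𝓝[>] x, z ∈ (Prod.snd '' ((Kset e ×ˢ Icc 0 t) ∩ Fi p e f ⁻¹' (Iic 0)))ᶜ :=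
      nhdsWithin_le_nhds (hC.isOpen_compl.mem_nhds hx')
    have h2 : ∀ᶠ z in 𝓝[>] x, z ∈ Ioc x (min y t) :=
      Ioc_mem_nhdsGT (lt_min hy hx.2)
    obtain ⟨z, hz1, hz2⟩ := (h1.and h2).exists
    refine ⟨z, ?_, hz2.1, hz2.2.trans (min_le_left _ _)⟩
    intro k hk
    by_contra hneg
    push Not at hneg
    exact hz1 ⟨(k, z), ⟨⟨hk, hx.1.trans hz2.1.le, hz2.2.trans (min_le_right _ _)⟩, hneg.le⟩, rfl⟩
  exact hs.Icc_subset_of_forall_exists_gt h0 hgt ⟨ht, le_rfl⟩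

theorem half_sym [Nontrivial E] (p : ℕ) (hp : 1 ≤ p) (e : E) (he : ‖e‖ = 1) (f u : E → ℝ) (γ : ℝ)
    (hγ : 0 < γ) (σ α : ℝ) (hσ : 0 < σ) (hα : 0 < α)
    (hf : AEStronglyMeasurable f volume) (hpos : ∀ᵐ y, 0 < f y)
    (hint : Integrable (fun y => (1 + ‖y‖) ^ p * f y))
    (hu : ∀ x, u x = γ * ∫ y, ‖x - y‖ ^ p * f y)
    (hfu : ∀ᵐ y, f y = (2 / (1 + ‖y‖ ^ 2)) ^ σ * u y ^ (-α))
    (s : ℝ) (hs : 0 ≤ s) : u (-(s • e)) ≤ u (s • e) := by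
  have hcont : Continuous u := by
    have : u = fun x => γ * ∫ y, ‖x - y‖ ^ p * f y := funext hu
    rw [this]
    exact continuous_const.mul (u_cont p f hf hpos hint)
  have hin : inner ℝ (-(s • e)) e = -s := by simp [inner_smul_left, he]
  have key : ∀ l : ℝ, 0 < l → u (-(s • e)) ≤ u ((s + 2 * l) • e) := by
    intro l hl
    have h1 := u_diff p e he f u γ hf hpos hint hu l hl (-(s • e))
    have h2 := Fi_all p hp e he f u γ hγ σ α hσ hα hf hpos hint hu hfu l⁻¹ (by positivity) _
      (Kset_mem e l hl (-(s • e)) (by rw [hin]; linarith))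
    have h3 : 0 ≤ l - inner ℝ (-(s • e)) e := by rw [hin]; linarith
    have h4 : 0 ≤ u (rf e l (-(s • e))) - u (-(s • e)) := by rw [h1]; positivity
    have h5 : rf e l (-(s • e)) = (s + 2 * l) • e := by
      rw [rf, hin, ← neg_smul, ← add_smul]; congr 1; ring
    rw [h5] at h4
    linarith
  have hlim : Tendsto (fun l : ℝ => u ((s + 2 * l) • e)) (𝓝[>] 0) (𝓝 (u (s • e))) := by
    have : Continuous (fun l : ℝ => u ((s + 2 * l) • e)) := by fun_prop
    have h := (this.tendsto 0).mono_left (nhdsWithin_le_nhds (s := Ioi 0))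
    simpa using h
  apply ge_of_tendsto hlim
  filter_upwards [self_mem_nhdsWithin] with l hl
  exact key l hl

theorem full_sym [Nontrivial E] (p : ℕ) (hp : 1 ≤ p) (z : E) (f u : E → ℝ) (γ : ℝ)
    (hγ : 0 < γ) (σ α : ℝ) (hσ : 0 < σ) (hα : 0 < α)
    (hf : AEStronglyMeasurable f volume) (hpos : ∀ᵐ y, 0 < f y)
    (hint : Integrable (fun y => (1 + ‖y‖) ^ p * f y))
    (hu : ∀ x, u x = γ * ∫ y, ‖x - y‖ ^ p * f y)
    (hfu : ∀ᵐ y, f y = (2 / (1 + ‖y‖ ^ 2)) ^ σ * u y ^ (-α)) : u (-z) = u z := by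
  have h : ∀ z : E, u (-z) ≤ u z := by
    intro z
    rcases eq_or_ne z 0 with rfl | hz
    · simp
    have hz' : ‖z‖ ≠ 0 := norm_ne_zero_iff.2 hz
    have he : ‖‖z‖⁻¹ • z‖ = 1 := by
      rw [norm_smul, norm_inv, norm_norm, inv_mul_cancel₀ hz']
    have := half_sym p hp _ he f u γ hγ σ α hσ hα hf hpos hint hu hfu ‖z‖ (norm_nonneg z)
    rwa [smul_smul, mul_inv_cancel₀ hz', one_smul] at this
  apply le_antisymm (h z)
  have := h (-z)
  rwa [neg_neg] at this

end

noncomputable section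

set_option linter.unusedSectionVars false

open Set Filter Topology



variable {E : Type*} [NormedAddCommGroup E] [InnerProductSpace ℝ E]
variable [FiniteDimensional ℝ E] [MeasurableSpace E] [BorelSpace E]

open EuclideanGeometry (inversion)

theorem inv_one_add (a : E) (r : ℝ) (hr : r ^ 2 = 1 + ‖a‖ ^ 2) (y : E) (hy : y ≠ a) :
    1 + ‖inversion a r y‖ ^ 2 = (1 + ‖y‖ ^ 2) / (‖y - a‖ / r) ^ 2 := by
  have hD : ‖y - a‖ ≠ 0 := norm_ne_zero_iff.2 (sub_ne_zero.2 hy)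
  have h1 : ‖y‖ ^ 2 = ‖y - a‖ ^ 2 + 2 * inner ℝ (y - a) a + ‖a‖ ^ 2 := by
    rw [← norm_add_sq_real, sub_add_cancel]
  unfold inversion
  simp only [vsub_eq_sub, vadd_eq_add]
  rw [norm_add_sq_real, norm_smul, inner_smul_left, h1, dist_eq_norm]
  simp only [Real.norm_eq_abs, mul_pow, sq_abs, div_pow, conj_trivial, abs_pow, abs_div, hr]
  have hr0 : (1 + ‖a‖ ^ 2) ≠ 0 := by positivity
  field_simp
  ring_nf
theorem chvar [Nontrivial E] (a : E) (r : ℝ) (hr : 0 < r) (g : E → ℝ) :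
    ∫ z, g z = ∫ y, (r / ‖y - a‖) ^ (2 * Module.finrank ℝ E) * g (inversion a r y) := by
  have himg : inversion a r '' {a}ᶜ = {a}ᶜ := by
    ext z
    constructor
    · rintro ⟨y, hy, rfl⟩ h
      exact hy ((EuclideanGeometry.inversion_eq_center hr.ne').1 h)
    · intro hz
      refine ⟨inversion a r z, ?_, EuclideanGeometry.inversion_inversion a hr.ne' z⟩
      intro h
      exact hz ((EuclideanGeometry.inversion_eq_center hr.ne').1 h)
  have hres : (volume : Measure E).restrict {a}ᶜ = volume :=
    Measure.restrict_eq_self_of_ae_mem (ae_ne_pt a)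
  have h := integral_image_eq_integral_abs_det_fderiv_smul (volume : Measure E)
    (s := {a}ᶜ) (f := inversion a r) (measurableSet_singleton a).compl
    (fun x hx => (EuclideanGeometry.hasFDerivAt_inversion (R := r) hx).hasFDerivWithinAt)
    (EuclideanGeometry.inversion_injective a hr.ne').injOn g
  rw [himg, hres] at h
  rw [h]
  apply integral_congr_ae
  filter_upwards with y
  rw [smul_eq_mul]
  congr 1
  have hdet : |ContinuousLinearMap.det
      ((((ℝ ∙ (y - a))ᗮ.reflection : E ≃L[ℝ] E)) : E →L[ℝ] E)| = 1 := by
    have := Submodule.det_reflection (𝕜 := ℝ) (ℝ ∙ (y - a))ᗮ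
    have h2 : ContinuousLinearMap.det
      ((((ℝ ∙ (y - a))ᗮ.reflection : E ≃L[ℝ] E)) : E →L[ℝ] E) =
        (-1) ^ Module.finrank ℝ ((ℝ ∙ (y - a))ᗮᗮ : Submodule ℝ E) := this
    rw [h2]
    simp
  rw [ContinuousLinearMap.det, ContinuousLinearMap.toLinearMap_smul, LinearMap.det_smul, abs_mul]
  erw [hdet]
  rw [mul_one, dist_eq_norm, ← pow_mul, abs_of_nonneg (by positivity)]

theorem kelvin [Nontrivial E] (p : ℕ) (f : E → ℝ) (a : E) (r : ℝ) (hr : 0 < r) (x : E)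
    (hx : x ≠ a) :
    ∫ y, ‖x - y‖ ^ p * ((r / ‖y - a‖) ^ (p + 2 * Module.finrank ℝ E) * f (inversion a r y)) =
      (‖x - a‖ / r) ^ p * ∫ z, ‖inversion a r x - z‖ ^ p * f z := by
  rw [chvar a r hr (fun z => ‖inversion a r x - z‖ ^ p * f z), ← integral_const_mul]
  apply integral_congr_ae
  filter_upwards [ae_ne_pt a] with y hy
  have h := EuclideanGeometry.dist_inversion_inversion hx hy r
  simp only [dist_eq_norm] at h
  rw [h]
  have h1 : 0 < ‖x - a‖ := norm_pos_iff.2 (sub_ne_zero.2 hx)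
  have h2 : 0 < ‖y - a‖ := norm_pos_iff.2 (sub_ne_zero.2 hy)
  have h3 : ‖x - y‖ ^ p * (r / ‖y - a‖) ^ p =
      (‖x - a‖ / r) ^ p * (r ^ 2 / (‖x - a‖ * ‖y - a‖) * ‖x - y‖) ^ p := by
    rw [← mul_pow, ← mul_pow]
    congr 1
    field_simp
  calc _ = (‖x - y‖ ^ p * (r / ‖y - a‖) ^ p) * (r / ‖y - a‖) ^ (2 * Module.finrank ℝ E) *
        f (inversion a r y) := by rw [pow_add]; ring
    _ = _ := by rw [h3]; ring

theorem dec_int (p : ℕ) (hd : 1 ≤ Module.finrank ℝ E) (f : E → ℝ)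
    (hf : AEStronglyMeasurable f volume) (C : ℝ)
    (hpos : ∀ᵐ y, 0 < f y)
    (hb : ∀ᵐ y : E, f y ≤ C * (1 + ‖y‖ ^ 2) ^ (-((p : ℝ) + 2 * Module.finrank ℝ E) / 2)) :
    Integrable (fun y => (1 + ‖y‖) ^ p * f y) := by
  have h1 : (Module.finrank ℝ E : ℝ) < 2 * Module.finrank ℝ E := by
    have : (1 : ℝ) ≤ Module.finrank ℝ E := by exact_mod_cast hd
    linarith
  have hI := integrable_rpow_neg_one_add_norm_sq (E := E) (μ := volume) h1
  apply Integrable.mono' (hI.const_mul (2 ^ ((p : ℝ) / 2) * C))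
  · exact (Continuous.aestronglyMeasurable (by fun_prop)).mul hf
  · filter_upwards [hpos, hb] with y hy hyb
    rw [norm_mul, Real.norm_eq_abs, Real.norm_eq_abs, abs_of_pos hy, abs_of_nonneg (by positivity)]
    have hs : 0 < 1 + ‖y‖ ^ 2 := by positivity
    have h2 : (1 + ‖y‖) ^ p ≤ 2 ^ ((p : ℝ) / 2) * (1 + ‖y‖ ^ 2) ^ ((p : ℝ) / 2) := by
      rw [← Real.mul_rpow (by norm_num) hs.le]
      have : (1 + ‖y‖) ^ p = ((1 + ‖y‖) ^ 2) ^ ((p : ℝ) / 2) := by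
        rw [← Real.rpow_natCast _ 2, ← Real.rpow_mul (by positivity), ← Real.rpow_natCast]
        congr 1
        push_cast
        ring
      rw [this]
      apply Real.rpow_le_rpow (by positivity) _ (by positivity)
      nlinarith [sq_nonneg (1 - ‖y‖)]
    calc (1 + ‖y‖) ^ p * f y ≤ (2 ^ ((p : ℝ) / 2) * (1 + ‖y‖ ^ 2) ^ ((p : ℝ) / 2)) *
          (C * (1 + ‖y‖ ^ 2) ^ (-((p : ℝ) + 2 * Module.finrank ℝ E) / 2)) := by gcongr
      _ = 2 ^ ((p : ℝ) / 2) * C * ((1 + ‖y‖ ^ 2) ^ ((p : ℝ) / 2) *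
          (1 + ‖y‖ ^ 2) ^ (-((p : ℝ) + 2 * Module.finrank ℝ E) / 2)) := by ring
      _ = _ := by
        rw [← Real.rpow_add hs]
        congr 2
        ring

theorem kelvin_sol [Nontrivial E] (p : ℕ) (hp : 1 ≤ p) (u : E → ℝ) (γ : ℝ)
    (hγ : 0 < γ) (σ α : ℝ) (hσ : 0 < σ) (hα : 0 < α)
    (hσd : 2 * σ + α * p = p + 2 * Module.finrank ℝ E)
    (hum : Continuous u) (hup : ∀ x, 0 < u x) (c : ℝ) (hc : 0 < c)
    (hcu : ∀ x, c⁻¹ * (1 + ‖x‖ ^ 2) ^ ((p : ℝ) / 2) ≤ u x)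
    (hu : ∀ x, u x = γ * ∫ y, ‖x - y‖ ^ p * ((2 / (1 + ‖y‖ ^ 2)) ^ σ * u y ^ (-α)))
    (a : E) (r : ℝ) (hr0 : 0 < r) (hr : r ^ 2 = 1 + ‖a‖ ^ 2) (z : E) (hz : z ≠ a) (hz' : -z ≠ a) :
    (‖-z - a‖ / r) ^ p * u (inversion a r (-z)) = (‖z - a‖ / r) ^ p * u (inversion a r z) := by
  set d := Module.finrank ℝ E with hd
  have hd1 : 1 ≤ d := Module.finrank_pos
  set f : E → ℝ := fun y => (2 / (1 + ‖y‖ ^ 2)) ^ σ * u y ^ (-α) with hfd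
  have hfm : Measurable f := by
    have := hum.measurable
    have h1 : Measurable (fun y : E => (2 / (1 + ‖y‖ ^ 2)) ^ σ) := by fun_prop
    exact h1.mul (this.pow_const _)
  have hfpos : ∀ y, 0 < f y := fun y => by
    have := hup y
    simp only [hfd]
    positivity
  have hfb : ∀ y, f y ≤ (2 ^ σ * c ^ α) * (1 + ‖y‖ ^ 2) ^ (-((p : ℝ) + 2 * d) / 2) := by
    intro y
    have hs : 0 < 1 + ‖y‖ ^ 2 := by positivity
    have h1 : u y ^ (-α) ≤ (c⁻¹ * (1 + ‖y‖ ^ 2) ^ ((p : ℝ) / 2)) ^ (-α) :=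
      Real.rpow_le_rpow_of_nonpos (by positivity) (hcu y) (by linarith)
    calc f y ≤ (2 / (1 + ‖y‖ ^ 2)) ^ σ * (c⁻¹ * (1 + ‖y‖ ^ 2) ^ ((p : ℝ) / 2)) ^ (-α) := by
          simp only [hfd]; gcongr
      _ = (2 ^ σ * c ^ α) * ((1 + ‖y‖ ^ 2) ^ (-σ) * (1 + ‖y‖ ^ 2) ^ ((p : ℝ) / 2 * (-α))) := by
          rw [Real.mul_rpow (by positivity) (by positivity), Real.div_rpow (by positivity) hs.le,
            Real.inv_rpow hc.le, Real.rpow_neg hc.le, inv_inv, ← Real.rpow_mul hs.le,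
            Real.rpow_neg hs.le σ]
          ring
      _ = _ := by
          rw [← Real.rpow_add hs]
          congr 2
          linarith
  set f' : E → ℝ := fun y => (r / ‖y - a‖) ^ (p + 2 * d) * f (inversion a r y) with hf'd
  have hφm : Measurable (inversion a r) := by
    unfold inversion
    simp only [vsub_eq_sub, vadd_eq_add]
    fun_prop
  have hf'm : Measurable f' := by
    have h1 : Measurable (fun y : E => (r / ‖y - a‖) ^ (p + 2 * d)) := by fun_prop
    exact h1.mul (hfm.comp hφm)
  have hf'pos : ∀ᵐ y, 0 < f' y := by
    filter_upwards [ae_ne_pt a] with y hy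
    have h2 : 0 < ‖y - a‖ := norm_pos_iff.2 (sub_ne_zero.2 hy)
    have := hfpos (inversion a r y)
    simp only [hf'd]
    positivity
  have hf'b : ∀ᵐ y, f' y ≤ (2 ^ σ * c ^ α) * (1 + ‖y‖ ^ 2) ^ (-((p : ℝ) + 2 * d) / 2) := by
    filter_upwards [ae_ne_pt a] with y hy
    have h2 : 0 < ‖y - a‖ := norm_pos_iff.2 (sub_ne_zero.2 hy)
    have h1 := hfb (inversion a r y)
    rw [inv_one_add a r hr y hy] at h1
    set q := ‖y - a‖ / r with hq
    have hq0 : 0 < q := by positivity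
    have hqi : r / ‖y - a‖ = q⁻¹ := by rw [hq, inv_div]
    simp only [hf'd]
    rw [hqi]
    calc _ ≤ q⁻¹ ^ (p + 2 * d) * ((2 ^ σ * c ^ α) *
          ((1 + ‖y‖ ^ 2) / q ^ 2) ^ (-((p : ℝ) + 2 * d) / 2)) := by gcongr
      _ = _ := by
        have h3 : (q ^ 2) ^ (-((p : ℝ) + 2 * d) / 2) = q⁻¹ ^ (p + 2 * d) := by
          rw [← Real.rpow_natCast q 2, ← Real.rpow_mul hq0.le, inv_pow, ← Real.rpow_natCast q,
            ← Real.rpow_neg hq0.le]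
          congr 1
          push_cast
          ring
        rw [Real.div_rpow (by positivity) (by positivity), h3]
        field_simp
  have hint := dec_int p hd1 f' hf'm.aestronglyMeasurable _ hf'pos hf'b
  set v : E → ℝ := fun x => γ * ∫ y, ‖x - y‖ ^ p * f' y with hv
  have hvu : ∀ x, x ≠ a → v x = (‖x - a‖ / r) ^ p * u (inversion a r x) := by
    intro x hx
    simp only [hv, hf'd]
    rw [kelvin p f a r hr0 x hx, hu (inversion a r x)]
    ring
  have hfv : ∀ᵐ y, f' y = (2 / (1 + ‖y‖ ^ 2)) ^ σ * v y ^ (-α) := by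
    filter_upwards [ae_ne_pt a] with y hy
    have h2 : 0 < ‖y - a‖ := norm_pos_iff.2 (sub_ne_zero.2 hy)
    rw [hvu y hy]
    simp only [hf'd, hfd]
    rw [inv_one_add a r hr y hy]
    set q := ‖y - a‖ / r with hq
    have hq0 : 0 < q := by positivity
    have hqi : r / ‖y - a‖ = q⁻¹ := by rw [hq, inv_div]
    have hu0 := hup (inversion a r y)
    set U := u (inversion a r y)
    rw [hqi, show 2 / ((1 + ‖y‖ ^ 2) / q ^ 2) = 2 / (1 + ‖y‖ ^ 2) * q ^ 2 by field_simp,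
      Real.mul_rpow (by positivity) (by positivity), Real.mul_rpow (by positivity) hu0.le]
    have h3 : q⁻¹ ^ (p + 2 * d) * (q ^ 2) ^ σ = (q ^ p) ^ (-α) := by
      rw [← Real.rpow_natCast q 2, ← Real.rpow_mul hq0.le, inv_pow, ← Real.rpow_natCast q,
        ← Real.rpow_neg hq0.le, ← Real.rpow_add hq0, ← Real.rpow_natCast q p,
        ← Real.rpow_mul hq0.le]
      congr 1
      push_cast
      linarith
    rw [← h3]
    ring
  have := full_sym p hp z f' v γ hγ σ α hσ hα hf'm.aestronglyMeasurable hf'pos hint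
    (fun x => rfl) hfv
  rwa [hvu _ hz, hvu _ hz'] at this

theorem final_rel [Nontrivial E] (p : ℕ) (hp : 1 ≤ p) (u : E → ℝ) (γ : ℝ)
    (hγ : 0 < γ) (σ α : ℝ) (hσ : 0 < σ) (hα : 0 < α)
    (hσd : 2 * σ + α * p = p + 2 * Module.finrank ℝ E)
    (hum : Continuous u) (hup : ∀ x, 0 < u x) (c : ℝ) (hc : 0 < c)
    (hcu : ∀ x, c⁻¹ * (1 + ‖x‖ ^ 2) ^ ((p : ℝ) / 2) ≤ u x)
    (hu : ∀ x, u x = γ * ∫ y, ‖x - y‖ ^ p * ((2 / (1 + ‖y‖ ^ 2)) ^ σ * u y ^ (-α)))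
    (x : E) : u x = (1 + ‖x‖ ^ 2) ^ ((p : ℝ) / 2) * u 0 := by
  rcases eq_or_ne x 0 with rfl | hx
  · simp
  have hx0 : 0 < ‖x‖ := norm_pos_iff.2 hx
  set w := Real.sqrt (1 + ‖x‖ ^ 2) with hw
  have hw2 : w ^ 2 = 1 + ‖x‖ ^ 2 := Real.sq_sqrt (by positivity)
  have hw1 : 1 < w := by
    rw [hw]; apply Real.lt_sqrt_of_sq_lt; nlinarith
  -- a = k x with k = 1/(1+w)
  set k := (1 + w)⁻¹ with hk
  have hk0 : 0 < k := by positivity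
  have hkw : k * (1 + w) = 1 := inv_mul_cancel₀ (by positivity)
  have hka : k ^ 2 * ‖x‖ ^ 2 = (w - 1) * k := by
    have : ‖x‖ ^ 2 = (w - 1) * (1 + w) := by linarith
    rw [this]
    calc _ = (w - 1) * k * (k * (1 + w)) := by ring
      _ = _ := by rw [hkw, mul_one]
  set a := k • x with ha
  have hna : ‖a‖ ^ 2 = (w - 1) * k := by
    rw [ha, norm_smul, mul_pow, Real.norm_eq_abs, sq_abs, hka]
  set r := Real.sqrt (1 + ‖a‖ ^ 2) with hrd
  have hr2 : r ^ 2 = 1 + ‖a‖ ^ 2 := Real.sq_sqrt (by positivity)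
  have hr0 : 0 < r := Real.sqrt_pos.2 (by positivity)
  have hr2' : r ^ 2 = 2 * w * k := by rw [hr2, hna]; linarith
  -- z = a / |a|^2 = x / (w - 1)
  have hwm : 0 < w - 1 := by linarith
  set z := (w - 1)⁻¹ • x with hz
  have hza : z - a = (2 * k / (w - 1)) • x := by
    rw [hz, ha, ← sub_smul]
    congr 1
    field_simp
    nlinarith
  have hza' : -z - a = (-(2 * w * k / (w - 1))) • x := by
    rw [hz, ha, ← neg_smul, ← sub_smul]
    congr 1
    field_simp
    nlinarith
  have hzn : z ≠ a := by
    rw [← sub_ne_zero, hza]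
    exact smul_ne_zero (by positivity) hx
  have hzn' : -z ≠ a := by
    rw [← sub_ne_zero, hza']
    exact smul_ne_zero (neg_ne_zero.2 (by positivity)) hx
  have hx2 : ‖x‖ ^ 2 = (w - 1) * (1 + w) := by linarith
  have hki : 1 + w = k⁻¹ := by rw [hk, inv_inv]
  have hd1 : ‖z - a‖ = 2 * k / (w - 1) * ‖x‖ := by
    rw [hza, norm_smul, Real.norm_eq_abs, abs_of_pos (by positivity)]
  have hd2 : ‖-z - a‖ = 2 * w * k / (w - 1) * ‖x‖ := by
    rw [hza', norm_smul, Real.norm_eq_abs, abs_neg, abs_of_pos (by positivity)]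
  have hi1 : inversion a r z = x := by
    unfold inversion
    simp only [vsub_eq_sub, vadd_eq_add, dist_eq_norm]
    rw [hd1, hza, ha, smul_smul, ← add_smul, div_pow, mul_pow, hx2, hr2']
    conv_rhs => rw [← one_smul ℝ x]
    congr 1
    rw [hki]
    have : k * w = 1 - k := by linarith
    field_simp
    nlinarith
  have hi2 : inversion a r (-z) = 0 := by
    unfold inversion
    simp only [vsub_eq_sub, vadd_eq_add, dist_eq_norm]
    rw [hd2, hza', ha, smul_smul, ← add_smul, div_pow, mul_pow, hx2, hr2']
    rw [hki]
    convert zero_smul ℝ x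
    field_simp
    ring
  have key := kelvin_sol p hp u γ hγ σ α hσ hα hσd hum hup c hc hcu hu a r hr0 hr2 z hzn hzn'
  rw [hi1, hi2, hd1, hd2] at key
  have h1 : (2 * w * k / (w - 1) * ‖x‖ / r) ^ p = w ^ p * (2 * k / (w - 1) * ‖x‖ / r) ^ p := by
    rw [← mul_pow]; congr 1; ring
  rw [h1] at key
  have hB : (2 * k / (w - 1) * ‖x‖ / r) ^ p ≠ 0 := by positivity
  have h2 : u x = w ^ p * u 0 := by
    apply mul_left_cancel₀ hB
    linarith
  rw [h2, ← hw2, ← Real.rpow_natCast w 2, ← Real.rpow_mul (by positivity), ← Real.rpow_natCast]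
  congr 2
  push_cast
  ring

end

/-- Liouville result, case `ε = 0`: a positive smooth solution of
`u(x) = γ ∫ |x−y|^{2m−n} (2/(1+|y|²))^{(n+2m)/2 + α(n−2m)/2} u(y)^{−α} dy`
with growth `u ≍ (1+|x|²)^{(2m−n)/2}` and `0 < α < (n+2m)/(2m−n)` must be
`u(x) = ((1+|x|²)/2)^{(2m−n)/2}`. Here `γ` is the constant from the context. -/
theorem stmt12 (n m : ℕ) (hn : 3 ≤ n) (hodd : Odd n) (hmn : n < 2 * m)
    (α : ℝ) (hα0 : 0 < α) (hαc : α < ((n : ℝ) + 2 * m) / (2 * (m : ℝ) - n))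
    (γ : ℝ) (hγ : 0 < γ)
    (hγeq : ∀ x : EuclideanSpace ℝ (Fin n),
      ((1 + ‖x‖ ^ 2) / 2) ^ ((2 * (m : ℝ) - n) / 2) =
        γ * ∫ y, ‖x - y‖ ^ (2 * m - n) * (2 / (1 + ‖y‖ ^ 2)) ^ (((n : ℝ) + 2 * m) / 2))
    (u : EuclideanSpace ℝ (Fin n) → ℝ) (husm : ContDiff ℝ (⊤ : ℕ∞) u)
    (hupos : ∀ x, 0 < u x)
    (hbound : ∃ c : ℝ, 0 < c ∧ ∀ x,
      c⁻¹ * (1 + ‖x‖ ^ 2) ^ ((2 * (m : ℝ) - n) / 2) ≤ u x ∧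
        u x ≤ c * (1 + ‖x‖ ^ 2) ^ ((2 * (m : ℝ) - n) / 2))
    (hueq : ∀ x, u x = γ * ∫ y, ‖x - y‖ ^ (2 * m - n) *
      (2 / (1 + ‖y‖ ^ 2)) ^ (((n : ℝ) + 2 * m) / 2 + α * ((n : ℝ) - 2 * m) / 2) *
        u y ^ (-α)) :
    ∀ x : EuclideanSpace ℝ (Fin n),
      u x = ((1 + ‖x‖ ^ 2) / 2) ^ ((2 * (m : ℝ) - n) / 2) := by
  obtain ⟨c, hc, hcb⟩ := hbound
  have hcast : ((2 * m - n : ℕ) : ℝ) = 2 * (m : ℝ) - n := by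
    rw [Nat.cast_sub hmn.le]; push_cast; ring
  have hp1 : 1 ≤ 2 * m - n := by omega
  have hpp : 0 < 2 * (m : ℝ) - n := by
    rw [← hcast]; exact_mod_cast hp1
  have hrank : Module.finrank ℝ (EuclideanSpace ℝ (Fin n)) = n := by simp
  have : Nontrivial (EuclideanSpace ℝ (Fin n)) :=
    Module.nontrivial_of_finrank_pos (R := ℝ) (by rw [hrank]; omega)
  rw [lt_div_iff₀ hpp] at hαc
  have hrel := final_rel (2 * m - n) hp1 u γ hγ
    (((n : ℝ) + 2 * m) / 2 + α * ((n : ℝ) - 2 * m) / 2) α (by linarith) hα0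
    (by rw [hrank, hcast]; ring) husm.continuous hupos c hc
    (fun x => by rw [hcast]; exact (hcb x).1)
    (fun x => by rw [hueq x]; simp only [mul_assoc])
  rw [hcast] at hrel
  set q := (2 * (m : ℝ) - n) / 2 with hq
  set κ := 2 ^ q * u 0 with hκ
  have h0 := hupos 0
  have hκ0 : 0 < κ := by positivity
  have huκ : ∀ x, u x = κ * ((1 + ‖x‖ ^ 2) / 2) ^ q := by
    intro x
    rw [hrel x, Real.div_rpow (by positivity) (by norm_num), hκ]
    field_simp
  have hκ1 : κ = κ ^ (-α) := by
    have h1 := hueq 0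
    have h2 : (fun y : EuclideanSpace ℝ (Fin n) => ‖0 - y‖ ^ (2 * m - n) *
      (2 / (1 + ‖y‖ ^ 2)) ^ (((n : ℝ) + 2 * m) / 2 + α * ((n : ℝ) - 2 * m) / 2) *
        u y ^ (-α)) = fun y => κ ^ (-α) *
          (‖0 - y‖ ^ (2 * m - n) * (2 / (1 + ‖y‖ ^ 2)) ^ (((n : ℝ) + 2 * m) / 2)) := by
      ext y
      have hs : 0 < 2 / (1 + ‖y‖ ^ 2) := by positivity
      rw [huκ y, Real.mul_rpow hκ0.le (by positivity), ← Real.rpow_mul (by positivity),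
        show (1 + ‖y‖ ^ 2) / 2 = (2 / (1 + ‖y‖ ^ 2))⁻¹ by rw [inv_div],
        Real.inv_rpow hs.le, ← Real.rpow_neg hs.le]
      have : (2 / (1 + ‖y‖ ^ 2)) ^ (((n : ℝ) + 2 * m) / 2) =
          (2 / (1 + ‖y‖ ^ 2)) ^ (((n : ℝ) + 2 * m) / 2 + α * ((n : ℝ) - 2 * m) / 2) *
            (2 / (1 + ‖y‖ ^ 2)) ^ (-(q * -α)) := by
        rw [← Real.rpow_add hs, hq]
        congr 1
        ring
      rw [this]
      ring
    rw [h2, integral_const_mul, mul_left_comm, ← hγeq 0, huκ 0] at h1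
    exact mul_right_cancel₀ (by positivity) h1
  have hκe : κ = 1 := by
    have h1 : κ ^ (1 + α) = 1 := by
      rw [Real.rpow_add hκ0, Real.rpow_one]
      nth_rewrite 1 [hκ1]
      rw [← Real.rpow_add hκ0]
      simp
    have h2 := congrArg Real.log h1
    rw [Real.log_rpow hκ0, Real.log_one] at h2
    have h3 : Real.log κ = 0 := by
      rcases mul_eq_zero.1 h2 with h | h
      · linarith
      · exact h
    exact Real.eq_one_of_pos_of_log_eq_zero hκ0 h3
  intro x
  rw [huκ x, hκe, one_mul]
end
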